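/- arXiv:2301.11571 — 7 statements merged into one kernel-verified Lean document; each statement's English description precedes it below -/
import Mathlib

section
/- Let n ≥ 2 and r be positive integers with r ≥ 40·log₂(n). Let A be a random r×n matrix whose entries are i.i.d. uniform in {−1,1}. Then with probability at least 1 − 2^{−0.01r} over A, the following holds: for every w ∈ ℝ^n with ‖w‖₁ = 1, the vector Aw has at least r/10 entries i with (Aw)_i < 14·√(log₂(n)/r). -/
open MeasureTheory

noncomputable def sg (b : Bool) : ℝ := if b then 1 else -1

noncomputable def XX {n k : ℕ} (f : Fin k → Fin n × Bool) (a : Fin n → Bool) : ℝ :=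
  ∑ s, sg (f s).2 * sg (a (f s).1)

lemma sg_not (b : Bool) : sg (!b) = - sg b := by cases b <;> simp [sg]

lemma XX_not {n k : ℕ} (f : Fin k → Fin n × Bool) (a : Fin n → Bool) :
    XX f (fun j => !(a j)) = - XX f a := by
  simp [XX, sg_not, Finset.sum_neg_distrib]

open Classical in
lemma half_card {n k : ℕ} (f : Fin k → Fin n × Bool) :
    Fintype.card (Fin n → Bool) ≤
      2 * (Finset.univ.filter (fun a : Fin n → Bool => XX f a ≤ 0)).card := by
  have h1 := Finset.card_filter_add_card_filter_not (s := (Finset.univ : Finset (Fin n → Bool)))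
    (fun a => XX f a ≤ 0)
  have h2 : (Finset.univ.filter (fun a : Fin n → Bool => ¬ XX f a ≤ 0)).card ≤
      (Finset.univ.filter (fun a : Fin n → Bool => XX f a ≤ 0)).card := by
    apply Finset.card_le_card_of_injOn (fun a j => !(a j))
    · intro a ha
      simp only [Finset.coe_filter, Finset.mem_univ, true_and, Set.mem_setOf_eq] at ha ⊢
      rw [XX_not]; linarith
    · intro a _ b _ h
      funext j
      have := congrFun h j
      simpa using this
  rw [Finset.card_univ] at h1
  omega

open Classical in
noncomputable def cnt {n r k : ℕ} (f : Fin k → Fin n × Bool) (A : Fin r → Fin n → Bool) : ℕ :=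
  (Finset.univ.filter (fun i => XX f (A i) ≤ 0)).card

open Classical in
lemma row_sum {n k : ℕ} (f : Fin k → Fin n × Bool) :
    ∑ a : Fin n → Bool, (if XX f a ≤ 0 then (1/8 : ℝ) else 1) ≤
      9/16 * (Fintype.card (Fin n → Bool) : ℝ) := by
  have h := half_card f
  have h1 := Finset.card_filter_add_card_filter_not (s := (Finset.univ : Finset (Fin n → Bool)))
    (fun a => XX f a ≤ 0)
  rw [Finset.card_univ] at h1
  rw [Finset.sum_ite]
  simp only [Finset.sum_const, nsmul_eq_mul]
  have h' : (Fintype.card (Fin n → Bool) : ℝ) ≤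
      2 * ((Finset.univ.filter (fun a : Fin n → Bool => XX f a ≤ 0)).card : ℝ) := by
    exact_mod_cast h
  have h1' : ((Finset.univ.filter (fun a : Fin n → Bool => XX f a ≤ 0)).card : ℝ) +
     ((Finset.univ.filter (fun a : Fin n → Bool => ¬ XX f a ≤ 0)).card : ℝ)
      = (Fintype.card (Fin n → Bool) : ℝ) := by exact_mod_cast h1
  linarith

lemma gen_sum {n r k : ℕ} (f : Fin k → Fin n × Bool) :
    ∑ A : Fin r → Fin n → Bool, (1/8 : ℝ) ^ (cnt f A) ≤
      (9/16 : ℝ) ^ r * (Fintype.card (Fin r → Fin n → Bool) : ℝ) := by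
  classical
  have h : ∀ A : Fin r → Fin n → Bool, (1/8 : ℝ) ^ (cnt f A) =
      ∏ i, (if XX f (A i) ≤ 0 then (1/8 : ℝ) else 1) := by
    intro A
    rw [Finset.prod_ite]
    simp [cnt]
  simp_rw [h]
  have h2 := Fintype.sum_pow (fun a : Fin n → Bool => (if XX f a ≤ 0 then (1/8 : ℝ) else 1)) r
  rw [← h2]
  have h3 : (Fintype.card (Fin r → Fin n → Bool) : ℝ) = (Fintype.card (Fin n → Bool) : ℝ)^r := by
    rw [Fintype.card_fun (α := Fin r)]; simp
  rw [h3, ← mul_pow]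
  apply pow_le_pow_left₀ _ (row_sum f)
  apply Finset.sum_nonneg
  intro i _
  split_ifs <;> norm_num

open Classical in
lemma tail_card {n r k : ℕ} (f : Fin k → Fin n × Bool) :
    ((Finset.univ.filter (fun A : Fin r → Fin n → Bool => (cnt f A : ℝ) ≤ 0.12 * r)).card : ℝ) ≤
      (2 : ℝ) ^ (-(0.44 : ℝ) * r) * (Fintype.card (Fin r → Fin n → Bool) : ℝ) := by
  have h1 : (9/16 : ℝ) ^ r ≤ (2 : ℝ) ^ (-(0.8 : ℝ) * r) := by
    rw [Real.rpow_mul (by norm_num), Real.rpow_natCast]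
    apply pow_le_pow_left₀ (by norm_num)
    have : ((9/16 : ℝ)) = ((9/16 : ℝ)^(5:ℕ)) ^ (1/5 : ℝ) := by
      rw [← Real.rpow_natCast, ← Real.rpow_mul (by norm_num)]; norm_num
    rw [this]
    have h2 : (2 : ℝ) ^ (-(0.8 : ℝ)) = ((2:ℝ) ^ (-4 : ℝ)) ^ (1/5 : ℝ) := by
      rw [← Real.rpow_mul (by norm_num)]; norm_num
    rw [h2]
    apply Real.rpow_le_rpow (by norm_num) _ (by norm_num)
    rw [Real.rpow_neg (by norm_num)]
    norm_num
  have h2 : ((Finset.univ.filter (fun A : Fin r → Fin n → Bool => (cnt f A : ℝ) ≤ 0.12 * r)).card : ℝ)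
      * (2:ℝ) ^ (-(0.36 : ℝ) * r) ≤ ∑ A : Fin r → Fin n → Bool, (1/8 : ℝ) ^ (cnt f A) := by
    rw [← nsmul_eq_mul, ← Finset.sum_const]
    refine le_trans (Finset.sum_le_sum (g := fun A => (1/8 : ℝ) ^ (cnt f A)) ?_) ?_
    · intro A hA
      simp only [Finset.mem_filter, Finset.mem_univ, true_and] at hA
      have : (1/8 : ℝ) ^ (cnt f A) = (2:ℝ) ^ (-3 * (cnt f A : ℝ)) := by
        rw [Real.rpow_mul (by norm_num), Real.rpow_natCast]
        congr 1
        rw [Real.rpow_neg (by norm_num)]; norm_num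
      rw [this]
      apply Real.rpow_le_rpow_of_exponent_le (by norm_num)
      linarith
    · apply Finset.sum_le_sum_of_subset_of_nonneg (Finset.subset_univ _)
      intros; positivity
  have h3 := h2.trans (gen_sum f)
  have h4 : (2:ℝ) ^ (-(0.44 : ℝ) * r) * (2:ℝ) ^ (-(0.36 : ℝ) * r) = (2:ℝ) ^ (-(0.8 : ℝ) * r) := by
    rw [← Real.rpow_add (by norm_num)]; congr 1; ring
  have hp : (0:ℝ) < (2:ℝ) ^ (-(0.36 : ℝ) * r) := by positivity
  refine le_of_mul_le_mul_right (h3.trans ?_) hp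
  rw [mul_right_comm, h4]
  gcongr

/-- Rounding. -/
lemma rounding {n r k : ℕ} (A : Fin r → Fin n → Bool) (w : Fin n → ℝ) (hw : ∑ j, |w j| = 1)
    (t : ℝ) (ht0 : 0 < t) (ht1 : t ≤ 1) (hk : 16 ≤ k * t ^ 2)
    (hc : (({i : Fin r | ∑ j, (if A i j then (1 : ℝ) else -1) * w j < t}).ncard : ℝ) < (r : ℝ) / 10) :
    ∃ f : Fin k → Fin n × Bool, (cnt f A : ℝ) ≤ 0.12 * r := by
  classical
  set p : Fin n × Bool → ℝ := fun x => if x.2 then max (w x.1) 0 else max (-(w x.1)) 0 with hp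
  have hp0 : ∀ x, 0 ≤ p x := by
    intro x; simp only [hp]; split_ifs <;> exact le_max_right _ _
  have hp1 : ∑ x, p x = 1 := by
    rw [← hw, Fintype.sum_prod_type]
    apply Finset.sum_congr rfl
    intro j _
    simp only [hp, Fintype.sum_bool]
    rcases le_total 0 (w j) with h | h
    · simp [abs_of_nonneg h, h]
    · simp [abs_of_nonpos h, h]
  have hpm : ∀ i, ∑ x, p x * (sg x.2 * sg (A i x.1)) =
      ∑ j, (if A i j then (1 : ℝ) else -1) * w j := by
    intro i
    rw [Fintype.sum_prod_type]
    apply Finset.sum_congr rfl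
    intro j _
    simp only [hp, Fintype.sum_bool, sg]
    rcases le_total 0 (w j) with h | h
    · simp [h, mul_comm]
    · simp [h, mul_comm]
  have hP1 : ∑ f : Fin k → Fin n × Bool, ∏ s, p (f s) = 1 := by
    rw [← Fintype.sum_pow, hp1, one_pow]
  have hP0 : ∀ f : Fin k → Fin n × Bool, 0 ≤ ∏ s, p (f s) := fun f =>
    Finset.prod_nonneg (fun s _ => hp0 _)
  -- per-row bound
  have hrow : ∀ i, t ≤ ∑ j, (if A i j then (1 : ℝ) else -1) * w j →
      ∑ f : Fin k → Fin n × Bool, (∏ s, p (f s)) * (if XX f (A i) ≤ 0 then (1:ℝ) else 0) ≤ 0.02 := by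
    intro i hi
    have e1 : ∀ f : Fin k → Fin n × Bool,
        (∏ s, p (f s)) * (if XX f (A i) ≤ 0 then (1:ℝ) else 0) ≤
        ∏ s, (p (f s) * Real.exp (-(t/2) * (sg (f s).2 * sg (A i (f s).1)))) := by
      intro f
      rw [Finset.prod_mul_distrib, ← Real.exp_sum, ← Finset.mul_sum]
      apply mul_le_mul_of_nonneg_left _ (hP0 f)
      split_ifs with h
      · apply Real.one_le_exp
        change 0 ≤ -(t/2) * XX f (A i)
        nlinarith
      · positivity
    refine (Finset.sum_le_sum (fun f _ => e1 f)).trans ?_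
    rw [← Fintype.sum_pow (fun x : Fin n × Bool => p x * Real.exp (-(t/2) * (sg x.2 * sg (A i x.1))))]
    have e2 : ∑ x : Fin n × Bool, p x * Real.exp (-(t/2) * (sg x.2 * sg (A i x.1))) ≤
        Real.exp (-(t^2/4)) := by
      have e3 : ∀ x : Fin n × Bool, p x * Real.exp (-(t/2) * (sg x.2 * sg (A i x.1))) ≤
          p x * (1 + t^2/4) - t/2 * (p x * (sg x.2 * sg (A i x.1))) := by
        intro x
        have hs : (sg x.2 * sg (A i x.1))^2 = 1 := by
          unfold sg; split_ifs <;> norm_num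
        have ha : |sg x.2 * sg (A i x.1)| = 1 := by
          unfold sg; split_ifs <;> norm_num
        have := Real.abs_exp_sub_one_sub_id_le (x := -(t/2) * (sg x.2 * sg (A i x.1)))
          (by rw [abs_mul, ha, abs_neg, abs_of_pos (by linarith)]; linarith)
        have h2 := (abs_le.1 this).2
        rw [mul_pow, hs] at h2
        have h3 : Real.exp (-(t/2) * (sg x.2 * sg (A i x.1))) ≤
          1 + t^2/4 - t/2 * (sg x.2 * sg (A i x.1)) := by nlinarith
        calc _ ≤ _ := mul_le_mul_of_nonneg_left h3 (hp0 x)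
          _ = _ := by ring
      refine (Finset.sum_le_sum (fun x _ => e3 x)).trans ?_
      rw [Finset.sum_sub_distrib, ← Finset.sum_mul, ← Finset.mul_sum, hp1, hpm]
      have := Real.add_one_le_exp (-(t^2/4))
      nlinarith
    have e4 : 0 ≤ ∑ x : Fin n × Bool, p x * Real.exp (-(t/2) * (sg x.2 * sg (A i x.1))) :=
      Finset.sum_nonneg (fun x _ => mul_nonneg (hp0 x) (Real.exp_pos _).le)
    refine (pow_le_pow_left₀ e4 e2 k).trans ?_
    rw [← Real.exp_nat_mul]
    have e5 : Real.exp (k * -(t^2/4)) ≤ Real.exp (-4) := by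
      apply Real.exp_le_exp.2; nlinarith
    refine e5.trans ?_
    rw [Real.exp_neg]
    have e6 : (2.7:ℝ)^4 ≤ Real.exp 4 := by
      have : Real.exp 4 = (Real.exp 1)^4 := by rw [← Real.exp_nat_mul]; norm_num
      rw [this]
      apply pow_le_pow_left₀ (by norm_num)
      have := Real.exp_one_gt_d9
      linarith
    rw [inv_le_comm₀ (Real.exp_pos _) (by norm_num)]
    refine le_trans ?_ e6
    norm_num
  have hrow' : ∀ i, ∑ f : Fin k → Fin n × Bool, (∏ s, p (f s)) * (if XX f (A i) ≤ 0 then (1:ℝ) else 0)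
      ≤ (if ∑ j, (if A i j then (1 : ℝ) else -1) * w j < t then 1 else 0) + 0.02 := by
    intro i
    split_ifs with h
    · have : ∑ f : Fin k → Fin n × Bool, (∏ s, p (f s)) * (if XX f (A i) ≤ 0 then (1:ℝ) else 0) ≤ 1 := by
        refine le_trans (Finset.sum_le_sum (g := fun f : Fin k → Fin n × Bool => ∏ s, p (f s)) ?_) hP1.le
        intro f _
        have := hP0 f
        split_ifs <;> simp [this]
      linarith
    · have := hrow i (not_lt.1 h); linarith
  have hcnt : ∀ f : Fin k → Fin n × Bool, (cnt f A : ℝ) = ∑ i, (if XX f (A i) ≤ 0 then (1:ℝ) else 0) := by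
    intro f; simp [cnt]
  have htot : ∑ f : Fin k → Fin n × Bool, (∏ s, p (f s)) * (cnt f A : ℝ) < 0.12 * r := by
    simp_rw [hcnt, Finset.mul_sum]
    rw [Finset.sum_comm]
    refine (Finset.sum_le_sum (fun i _ => hrow' i)).trans_lt ?_
    rw [Finset.sum_add_distrib, Finset.sum_boole]
    rw [Set.ncard_eq_toFinset_card'] at hc
    simp only [Set.toFinset_setOf] at hc
    simp only [Finset.sum_const, Finset.card_univ, Fintype.card_fin, nsmul_eq_mul]
    linarith
  by_contra hcon
  push Not at hcon
  have : ∑ f : Fin k → Fin n × Bool, (∏ s, p (f s)) * (0.12 * r : ℝ) ≤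
      ∑ f : Fin k → Fin n × Bool, (∏ s, p (f s)) * (cnt f A : ℝ) :=
    Finset.sum_le_sum (fun f _ => mul_le_mul_of_nonneg_left (hcon f).le (hP0 f))
  rw [← Finset.sum_mul, hP1] at this
  linarith

open Classical in
lemma bad_card (n r : ℕ) (hn : 2 ≤ n) (hr : 0 < r) :
    ((Finset.univ.filter (fun A : Fin r → Fin n → Bool => ¬ ∀ w : Fin n → ℝ, ∑ j, |w j| = 1 →
          (r : ℝ) / 10 ≤
            (({i : Fin r | ∑ j, (if A i j then (1 : ℝ) else -1) * w j <
              14 * Real.sqrt (Real.logb 2 n / r)}).ncard : ℝ))).card : ℝ) ≤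
      (2 : ℝ) ^ (-(0.01 : ℝ) * r) * (Fintype.card (Fin r → Fin n → Bool) : ℝ) := by
  have hr' : (0:ℝ) < r := by exact_mod_cast hr
  have hn' : (2:ℝ) ≤ n := by exact_mod_cast hn
  set L := Real.logb 2 n with hL
  have hL1 : 1 ≤ L := by
    rw [hL, Real.le_logb_iff_rpow_le (by norm_num) (by linarith)]; simpa using hn'
  have hnL : (2:ℝ) ^ L = n := Real.rpow_logb (by norm_num) (by norm_num) (by linarith)
  set t := 14 * Real.sqrt (L / r) with ht
  have ht0 : 0 < t := by positivity
  have ht2 : t ^ 2 = 196 * (L / r) := by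
    rw [ht, mul_pow, Real.sq_sqrt (by positivity)]; norm_num
  by_cases ht1 : t ≤ 1
  · have hLr : 196 * L ≤ r := by
      have : 196 * (L / r) ≤ 1 := by rw [← ht2]; nlinarith
      rw [← mul_div_assoc, div_le_one hr'] at this
      exact this
    set k := ⌊(r : ℝ) / (10 * L)⌋₊ with hkdef
    have hk1 : (k : ℝ) * (10 * L) ≤ r := by
      have := Nat.floor_le (a := (r : ℝ) / (10 * L)) (by positivity)
      rwa [le_div_iff₀ (by positivity)] at this
    have hk2 : (r : ℝ) < (k + 1) * (10 * L) := by
      have := Nat.lt_floor_add_one ((r : ℝ) / (10 * L))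
      rwa [div_lt_iff₀ (by positivity)] at this
    have hk : 16 ≤ k * t ^ 2 := by
      rw [ht2, ← mul_div_assoc, ← mul_div_assoc, le_div_iff₀ hr']
      nlinarith
    have hsub : (Finset.univ.filter (fun A : Fin r → Fin n → Bool => ¬ ∀ w : Fin n → ℝ, ∑ j, |w j| = 1 →
          (r : ℝ) / 10 ≤ (({i : Fin r | ∑ j, (if A i j then (1 : ℝ) else -1) * w j < t}).ncard : ℝ)))
        ⊆ Finset.univ.biUnion (fun f : Fin k → Fin n × Bool =>
          Finset.univ.filter (fun A : Fin r → Fin n → Bool => (cnt f A : ℝ) ≤ 0.12 * r)) := by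
      intro A hA
      simp only [Finset.mem_filter, Finset.mem_univ, true_and] at hA
      push Not at hA
      obtain ⟨w, hw, hc⟩ := hA
      obtain ⟨f, hf⟩ := rounding A w hw t ht0 ht1 hk hc
      simp only [Finset.mem_biUnion, Finset.mem_filter, Finset.mem_univ, true_and]
      exact ⟨f, hf⟩
    have h1 := (Finset.card_le_card hsub).trans Finset.card_biUnion_le
    have h2 := (Nat.cast_le (α := ℝ)).2 h1
    push_cast at h2
    refine h2.trans ((Finset.sum_le_sum (fun f _ => tail_card f)).trans ?_)
    rw [Finset.sum_const, nsmul_eq_mul, ← mul_assoc]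
    apply mul_le_mul_of_nonneg_right _ (by positivity)
    have h3 : ((Finset.univ : Finset (Fin k → Fin n × Bool)).card : ℝ) ≤ (2:ℝ) ^ ((0.2:ℝ) * r) := by
      rw [Finset.card_univ]
      simp only [Fintype.card_fun, Fintype.card_prod, Fintype.card_fin, Fintype.card_bool]
      push_cast
      calc ((n:ℝ) * 2)^k ≤ ((n:ℝ) * n)^k := by gcongr
        _ = (2:ℝ) ^ ((L + L) * k) := by
          rw [Real.rpow_mul (by norm_num), Real.rpow_natCast, Real.rpow_add (by norm_num), hnL]
        _ ≤ _ := by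
          apply Real.rpow_le_rpow_of_exponent_le (by norm_num)
          nlinarith
    calc _ ≤ (2:ℝ) ^ ((0.2:ℝ) * r) * (2:ℝ) ^ (-(0.44 : ℝ) * r) := by gcongr
      _ = (2:ℝ) ^ ((0.2:ℝ) * r + -(0.44 : ℝ) * r) := by rw [Real.rpow_add (by norm_num)]
      _ ≤ _ := by
        apply Real.rpow_le_rpow_of_exponent_le (by norm_num)
        linarith
  · have : (Finset.univ.filter (fun A : Fin r → Fin n → Bool => ¬ ∀ w : Fin n → ℝ, ∑ j, |w j| = 1 →
          (r : ℝ) / 10 ≤ (({i : Fin r | ∑ j, (if A i j then (1 : ℝ) else -1) * w j < t}).ncard : ℝ)))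
        = ∅ := by
      apply Finset.filter_eq_empty_iff.2
      intro A _
      rw [not_not]
      intro w hw
      have : {i : Fin r | ∑ j, (if A i j then (1 : ℝ) else -1) * w j < t} = Set.univ := by
        apply Set.eq_univ_of_forall
        intro i
        refine lt_of_le_of_lt ?_ (not_le.1 ht1)
        refine le_trans (Finset.sum_le_sum (g := fun j => |w j|) ?_) hw.le
        intro j _
        split_ifs
        · simpa using le_abs_self (w j)
        · simpa using neg_le_abs (w j)
      rw [this, Set.ncard_univ, Nat.card_fin]
      linarith
    rw [this]
    simp
    positivity

/-- For a random `r × n` matrix with i.i.d. uniform `±1` entries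
(`true ↦ 1`, `false ↦ -1`), with probability at least `1 - 2^(-0.01 r)`, every
`w` with `‖w‖₁ = 1` has at least `r/10` coordinates `i` with
`(Aw)_i < 14·√(log₂ n / r)`. -/
theorem adaboost_random_matrix_lemma
    (n r : ℕ) (hn : 2 ≤ n) (hr : 0 < r) (hrn : 40 * Real.logb 2 n ≤ (r : ℝ)) :
    ENNReal.ofReal (1 - (2 : ℝ) ^ (-(0.01 : ℝ) * r)) ≤
      (PMF.uniformOfFintype (Fin r → Fin n → Bool)).toMeasure
        {A | ∀ w : Fin n → ℝ, ∑ j, |w j| = 1 →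
          (r : ℝ) / 10 ≤
            (({i : Fin r | ∑ j, (if A i j then (1 : ℝ) else -1) * w j <
              14 * Real.sqrt (Real.logb 2 n / r)}).ncard : ℝ)} := by
  classical
  rw [PMF.toMeasure_uniformOfFintype_apply _ (Set.toFinite _).measurableSet]
  have hb := bad_card n r hn hr
  have hs := Finset.card_filter_add_card_filter_not (s := (Finset.univ : Finset (Fin r → Fin n → Bool)))
    (fun A => ∀ w : Fin n → ℝ, ∑ j, |w j| = 1 →
          (r : ℝ) / 10 ≤
            (({i : Fin r | ∑ j, (if A i j then (1 : ℝ) else -1) * w j <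
              14 * Real.sqrt (Real.logb 2 n / r)}).ncard : ℝ))
  rw [Finset.card_univ] at hs
  have hs' := congrArg (Nat.cast (R := ℝ)) hs
  push_cast only [Nat.cast_add] at hs'
  have hpos : (0:ℝ) < (Fintype.card (Fin r → Fin n → Bool) : ℝ) := by
    exact_mod_cast Fintype.card_pos
  rw [← ENNReal.ofReal_natCast, ← ENNReal.ofReal_natCast, ← ENNReal.ofReal_div_of_pos hpos]
  apply ENNReal.ofReal_le_ofReal
  rw [le_div_iff₀ hpos, Fintype.card_of_subtype (Finset.univ.filter
    (fun A : Fin r → Fin n → Bool => ∀ w : Fin n → ℝ, ∑ j, |w j| = 1 →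
          (r : ℝ) / 10 ≤
            (({i : Fin r | ∑ j, (if A i j then (1 : ℝ) else -1) * w j <
              14 * Real.sqrt (Real.logb 2 n / r)}).ncard : ℝ)))
      (by intro A; rw [Finset.mem_filter]; exact and_iff_right (Finset.mem_univ _))]
  linarith
end

section
/- There exist universal constants c̃₁, c̃₂ ∈ (0,1] and c̃₃ ≥ 1 such that for every positive integer n, every real β with 0 < β ≤ c̃₁/6, and every x ∈ ℝ^n with x_i ≥ 0 for all i and ∑_{i=1}^n x_i ≥ (1−β)/2, if h(1),…,h(n) are i.i.d. uniform random variables in {−1,1}, then ℙ[∑_{i=1}^n h(i)·x_i ≥ β] ≥ c̃₂·exp(−16·c̃₃·β²·n/c̃₁²). -/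
noncomputable def rE : List ℝ → (ℝ → ℝ) → ℝ
  | [], φ => φ 0
  | a :: l, φ => (rE l (fun y => φ (y + a)) + rE l (fun y => φ (y - a))) / 2

noncomputable def rInd (t : ℝ) (y : ℝ) : ℝ := if t ≤ y then 1 else 0

noncomputable def rV : List ℝ → ℝ
  | [] => 0
  | a :: l => a ^ 2 + rV l

noncomputable def rM : List ℝ → ℝ
  | [] => 0
  | a :: l => a ^ 4 + 6 * a ^ 2 * rV l + rM l

lemma rE_mono (l : List ℝ) : ∀ (φ ψ : ℝ → ℝ), (∀ y, φ y ≤ ψ y) → rE l φ ≤ rE l ψ := by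
  induction l with
  | nil => intro φ ψ h; exact h 0
  | cons a l ih =>
    intro φ ψ h
    have h1 := ih (fun y => φ (y + a)) (fun y => ψ (y + a)) (fun y => h _)
    have h2 := ih (fun y => φ (y - a)) (fun y => ψ (y - a)) (fun y => h _)
    simp only [rE]; linarith

lemma rE_add (l : List ℝ) : ∀ (φ ψ : ℝ → ℝ), rE l (fun y => φ y + ψ y) = rE l φ + rE l ψ := by
  induction l with
  | nil => intro φ ψ; rfl
  | cons a l ih =>
    intro φ ψ
    have h1 := ih (fun y => φ (y + a)) (fun y => ψ (y + a))
    have h2 := ih (fun y => φ (y - a)) (fun y => ψ (y - a))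
    simp only [rE]; linarith

lemma rE_neg (l : List ℝ) : ∀ (φ : ℝ → ℝ), rE l (fun y => φ (-y)) = rE l φ := by
  induction l with
  | nil => intro φ; simp [rE]
  | cons a l ih =>
    intro φ
    have h1 := ih (fun y => φ (y + a))
    have h2 := ih (fun y => φ (y - a))
    have e1 : (fun y : ℝ => φ (-(y + a))) = (fun y => φ (-y - a)) := by
      funext y; congr 1; ring
    have e2 : (fun y : ℝ => φ (-(y - a))) = (fun y => φ (-y + a)) := by
      funext y; congr 1; ring
    simp only [rE]
    rw [e1, e2]; linarith

lemma rE_poly (l : List ℝ) : ∀ (p0 p1 p2 p3 p4 : ℝ),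
    rE l (fun y => p0 + p1 * y + p2 * y ^ 2 + p3 * y ^ 3 + p4 * y ^ 4)
      = p0 + p2 * rV l + p4 * rM l := by
  induction l with
  | nil => intro p0 p1 p2 p3 p4; simp [rE, rV, rM]
  | cons a l ih =>
    intro p0 p1 p2 p3 p4
    have key : ∀ a : ℝ, rE l (fun y => p0 + p1 * (y + a) + p2 * (y + a) ^ 2 + p3 * (y + a) ^ 3
        + p4 * (y + a) ^ 4) = (p0 + p1 * a + p2 * a ^ 2 + p3 * a ^ 3 + p4 * a ^ 4)
        + (p2 + 3 * p3 * a + 6 * p4 * a ^ 2) * rV l + p4 * rM l := by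
      intro a
      rw [← ih _ (p1 + 2 * p2 * a + 3 * p3 * a ^ 2 + 4 * p4 * a ^ 3) _ (p3 + 4 * p4 * a) _]
      congr 1; funext y; ring
    have h2 := key (-a)
    simp only [← sub_eq_add_neg] at h2
    simp only [rE, rV, rM]
    rw [key a, h2]; ring

lemma rV_nonneg (l : List ℝ) : 0 ≤ rV l := by
  induction l with
  | nil => simp [rV]
  | cons a l ih => simp only [rV]; positivity

lemma rM_le (l : List ℝ) : rM l ≤ 3 * rV l ^ 2 := by
  induction l with
  | nil => simp [rV, rM]
  | cons a l ih => simp only [rV, rM]; nlinarith [sq_nonneg (a ^ 2)]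

lemma rV_cs (l : List ℝ) (r : ℝ) : 2 * r * l.sum ≤ rV l + l.length * r ^ 2 := by
  induction l with
  | nil => simp [rV]
  | cons a l ih =>
    simp only [rV, List.sum_cons, List.length_cons]; push_cast
    nlinarith [sq_nonneg (a - r)]

lemma rE_ind_anti (l : List ℝ) {s t : ℝ} (h : s ≤ t) : rE l (rInd t) ≤ rE l (rInd s) := by
  apply rE_mono
  intro y
  unfold rInd
  split_ifs <;> first | linarith | norm_num

lemma rE_ind_nonneg (l : List ℝ) (t : ℝ) : 0 ≤ rE l (rInd t) := by
  have h := rE_poly l 0 0 0 0 0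
  have h2 := rE_mono l (fun y => 0 + 0 * y + 0 * y ^ 2 + 0 * y ^ 3 + 0 * y ^ 4) (rInd t) (by
    intro y; unfold rInd; split_ifs <;> simp)
  rw [h] at h2; simpa using h2

lemma rE_ind_cons (a : ℝ) (l : List ℝ) (t : ℝ) :
    rE (a :: l) (rInd t) = (rE l (rInd (t - a)) + rE l (rInd (t + a))) / 2 := by
  have e1 : (fun y => rInd t (y + a)) = rInd (t - a) := by
    funext y; simp only [rInd, sub_le_iff_le_add]
  have e2 : (fun y => rInd t (y - a)) = rInd (t + a) := by
    funext y; simp only [rInd, le_sub_iff_add_le]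
  simp only [rE]; rw [e1, e2]

lemma rE_append (l₁ l₂ : List ℝ) : ∀ s t : ℝ,
    rE l₁ (rInd s) * rE l₂ (rInd t) ≤ rE (l₁ ++ l₂) (rInd (s + t)) := by
  induction l₁ with
  | nil =>
    intro s t
    simp only [rE, List.nil_append]
    by_cases hs : s ≤ 0
    · have : rInd s 0 = 1 := by simp [rInd, hs]
      rw [this, one_mul]; exact rE_ind_anti _ (by linarith)
    · have : rInd s 0 = 0 := by simp [rInd, hs]
      rw [this, zero_mul]; exact rE_ind_nonneg _ _
  | cons a l ih =>
    intro s t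
    rw [List.cons_append, rE_ind_cons, rE_ind_cons]
    have h1 := ih (s - a) t
    have h2 := ih (s + a) t
    rw [show s + t - a = s - a + t by ring, show s + t + a = s + a + t by ring]
    linarith

lemma rE_symm (l : List ℝ) (t : ℝ) :
    rE l (fun y => rInd t y + rInd t (-y)) = 2 * rE l (rInd t) := by
  rw [rE_add, rE_neg]; ring

lemma rE_pz (l : List ℝ) (t : ℝ) (h : 4 * t ^ 2 ≤ rV l) : 3 / 32 ≤ rE l (rInd t) := by
  rcases (rV_nonneg l).eq_or_lt with h0 | h0
  · have ht : t = 0 := by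
      have : t ^ 2 = 0 := le_antisymm (by linarith) (sq_nonneg t)
      simpa using this
    subst ht
    have h1 := rE_poly l 1 0 0 0 0
    have h2 := rE_mono l (fun y => 1 + 0 * y + 0 * y ^ 2 + 0 * y ^ 3 + 0 * y ^ 4)
      (fun y => rInd 0 y + rInd 0 (-y)) (by
        intro y; simp only [rInd]; split_ifs <;> linarith)
    rw [h1, rE_symm] at h2
    linarith
  · set v := rV l with hv
    have h1 := rE_poly l (-(1/8)) 0 (1 / (2 * v)) 0 (-(1 / (16 * v ^ 2)))
    have h2 := rE_mono l (fun y => -(1/8) + 0 * y + 1 / (2 * v) * y ^ 2 + 0 * y ^ 3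
      + (-(1 / (16 * v ^ 2))) * y ^ 4)
      (fun y => rInd t y + rInd t (-y)) (by
        intro y
        have e : -(1/8) + 0 * y + 1 / (2 * v) * y ^ 2 + 0 * y ^ 3
          + (-(1 / (16 * v ^ 2))) * y ^ 4 = -(1/8) + (y ^ 2 / v) / 2 - (y ^ 2 / v) ^ 2 / 16 := by
          field_simp; ring
        rw [e]
        set z := y ^ 2 / v with hz
        by_cases hy : t ≤ y ∨ t ≤ -y
        · have : 1 ≤ rInd t y + rInd t (-y) := by
            simp only [rInd]; rcases hy with hy | hy <;> simp only [hy, if_true] <;>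
              split_ifs <;> norm_num
          nlinarith [sq_nonneg (z - 4)]
        · push Not at hy
          have hyt : y ^ 2 ≤ t ^ 2 := by nlinarith
          have hz4 : z ≤ 1 / 4 := by
            rw [hz, div_le_iff₀ h0]; linarith
          have : 0 ≤ rInd t y + rInd t (-y) := by
            simp only [rInd]; split_ifs <;> norm_num
          nlinarith [sq_nonneg z])
    rw [h1, rE_symm] at h2
    have e1 : 1 / (2 * v) * v = 1 / 2 := by field_simp
    have e2 : 1 / (16 * v ^ 2) * rM l ≤ 3 / 16 := by
      rw [one_div, inv_mul_le_iff₀ (by positivity)]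
      have := rM_le l
      rw [← hv] at this; linarith
    rw [← hv] at h2
    linarith

lemma rE_blocks (β : ℝ) (m : ℕ) (hm : m * (25 * β ^ 2) ≤ 1) (k : ℕ) :
    ∀ l : List ℝ, l.length ≤ k * m → (3 / 32 : ℝ) ^ k ≤ rE l (rInd (5 / 2 * β * l.sum)) := by
  induction k with
  | zero =>
    intro l hl
    have : l = [] := by simpa using hl
    subst this
    simp [rE, rInd]
  | succ k ih =>
    intro l hl
    have h1 := ih (l.drop m) (by
      rw [List.length_drop]; rw [Nat.succ_mul] at hl; omega)
    have h2 : 3 / 32 ≤ rE (l.take m) (rInd (5 / 2 * β * (l.take m).sum)) := by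
      apply rE_pz
      have hlen : ((l.take m).length : ℝ) ≤ m := by
        exact_mod_cast List.length_take_le m l
      set l' := l.take m
      have h3 := rV_cs l' (25 * β ^ 2 * l'.sum)
      have h4 : (l'.length : ℝ) * (25 * β ^ 2) ≤ 1 :=
        le_trans (mul_le_mul_of_nonneg_right hlen (by positivity)) hm
      have h5 := mul_le_mul_of_nonneg_right h4 (show 0 ≤ 25 * β ^ 2 * l'.sum ^ 2 by positivity)
      nlinarith
    have h3 := rE_append (l.take m) (l.drop m) (5 / 2 * β * (l.take m).sum)
      (5 / 2 * β * (l.drop m).sum)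
    rw [List.take_append_drop, ← mul_add, ← List.sum_append, List.take_append_drop] at h3
    refine le_trans ?_ h3
    rw [pow_succ, mul_comm]
    exact mul_le_mul h2 h1 (by positivity) (rE_ind_nonneg _ _)

lemma rE_ofFn (n : ℕ) : ∀ (x : Fin n → ℝ) (φ : ℝ → ℝ),
    rE (List.ofFn x) φ
      = (∑ h : Fin n → Bool, φ (∑ i, (if h i then (1 : ℝ) else -1) * x i)) / 2 ^ n := by
  induction n with
  | zero => intro x φ; simp [rE]
  | succ n ih =>
    intro x φ
    rw [List.ofFn_succ]
    simp only [rE]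
    rw [ih, ih, ← (Fin.consEquiv (fun _ : Fin (n + 1) => Bool)).sum_comp, Fintype.sum_prod_type]
    simp only [Fin.consEquiv_apply, Fin.sum_univ_succ, Fintype.sum_bool, Fin.cons_zero,
      Fin.cons_succ, if_true, Bool.false_eq_true, if_false]
    have e1 : ∀ a b : ℝ, 1 * a + b = b + a := by intros; ring
    have e2 : ∀ a b : ℝ, -1 * a + b = b - a := by intros; ring
    simp only [e1, e2]
    rw [pow_succ]
    field_simp

lemma rE_measure (n : ℕ) (x : Fin n → ℝ) (t : ℝ) :
    (PMF.uniformOfFintype (Fin n → Bool)).toMeasure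
      {h | t ≤ ∑ i, (if h i then (1 : ℝ) else -1) * x i}
      = ENNReal.ofReal (rE (List.ofFn x) (rInd t)) := by
  classical
  rw [PMF.toMeasure_uniformOfFintype_apply _ (Set.toFinite _).measurableSet, rE_ofFn]
  simp only [rInd]
  rw [Finset.sum_boole, ENNReal.ofReal_div_of_pos (by positivity), ENNReal.ofReal_natCast,
    Fintype.card_subtype]
  congr 1
  simp

/-- Anti-concentration for Rademacher sums (Montgomery-Smith):
there are universal constants `c1, c2 ∈ (0,1]` and `c3 ≥ 1` such that for every `n`,
every `0 < β ≤ c1/6` and every nonnegative `x` with `∑ x i ≥ (1-β)/2`, a uniformly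
random sign vector `h` (`true ↦ 1`, `false ↦ -1`) satisfies
`ℙ[∑ h i · x i ≥ β] ≥ c2 · exp(-16 c3 β² n / c1²)`. -/
theorem adaboost_montgomery_smith_corollary :
    ∃ c1 c2 c3 : ℝ, 0 < c1 ∧ c1 ≤ 1 ∧ 0 < c2 ∧ c2 ≤ 1 ∧ 1 ≤ c3 ∧
      ∀ (n : ℕ), 0 < n → ∀ β : ℝ, 0 < β → β ≤ c1 / 6 →
        ∀ x : Fin n → ℝ, (∀ i, 0 ≤ x i) → (1 - β) / 2 ≤ ∑ i, x i →
          ENNReal.ofReal (c2 * Real.exp (-(16 * c3 * β ^ 2 * n / c1 ^ 2))) ≤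
            (PMF.uniformOfFintype (Fin n → Bool)).toMeasure
              {h | β ≤ ∑ i, (if h i then (1 : ℝ) else -1) * x i} := by
  refine ⟨1, Real.exp (-3), 10, one_pos, le_rfl, Real.exp_pos _, ?_, by norm_num, ?_⟩
  · rw [Real.exp_le_one_iff]; norm_num
  intro n hn β hβ hβ6 x hx hsum
  rw [rE_measure]
  apply ENNReal.ofReal_le_ofReal
  have hb2 : 25 * β ^ 2 ≤ 1 := by nlinarith
  have hb0 : 0 < 25 * β ^ 2 := by positivity
  set m := ⌊1 / (25 * β ^ 2)⌋₊ with hmdef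
  have hone : 1 ≤ 1 / (25 * β ^ 2) := by rw [le_div_iff₀ hb0]; linarith
  have hm1 : 1 ≤ m := Nat.le_floor (by simpa using hone)
  have hm : m * (25 * β ^ 2) ≤ 1 := by
    rw [← le_div_iff₀ hb0]; exact Nat.floor_le (by positivity)
  have hm' : 1 ≤ m * (50 * β ^ 2) := by
    have h1 : 1 / (25 * β ^ 2) < m + 1 := Nat.lt_floor_add_one _
    rw [div_lt_iff₀ hb0] at h1
    have h2 : (1 : ℝ) ≤ m := by exact_mod_cast hm1
    nlinarith
  have hk : n ≤ (n / m + 1) * m := by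
    have := Nat.lt_div_mul_add (a := n) (b := m) (by omega)
    rw [Nat.succ_mul]; omega
  have hmain := rE_blocks β m hm (n / m + 1) (List.ofFn x) (by simpa using hk)
  rw [List.sum_ofFn] at hmain
  have hanti := rE_ind_anti (List.ofFn x) (s := β) (t := 5 / 2 * β * ∑ i, x i) (by nlinarith)
  refine le_trans ?_ (le_trans hmain hanti)
  have hp : Real.exp (-3) ≤ 3 / 32 := by
    have h1 : (2.7 : ℝ) < Real.exp 1 := by have := Real.exp_one_gt_d9; linarith
    have h2 : Real.exp 3 = Real.exp 1 ^ 3 := by rw [← Real.exp_nat_mul]; norm_num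
    have h3 : (2.7 : ℝ) ^ 3 ≤ Real.exp 1 ^ 3 := by gcongr
    rw [Real.exp_neg, h2]
    rw [inv_le_comm₀ (by positivity) (by norm_num)]
    refine le_trans ?_ h3
    norm_num
  have hpk : Real.exp (-3) ^ (n / m + 1) ≤ (3 / 32 : ℝ) ^ (n / m + 1) := by gcongr
  refine le_trans ?_ hpk
  rw [← Real.exp_nat_mul, ← Real.exp_add, Real.exp_le_exp]
  have hd : ((n / m : ℕ) : ℝ) ≤ n * (50 * β ^ 2) := by
    refine le_trans Nat.cast_div_le ?_
    rw [div_le_iff₀ (by exact_mod_cast hm1)]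
    have : (0 : ℝ) ≤ n := Nat.cast_nonneg n
    nlinarith
  have hnn : (0 : ℝ) ≤ n * β ^ 2 := by positivity
  push_cast
  norm_num
  linarith
end

section
/- There exist universal constants c₀, c₁ ∈ (0,1] and c₂ ≥ 1 with the following property. Let u be an integer with u ≥ 2, let r, r₁ be nonnegative reals with r₁ = α²·r for some α ≥ 1 and r₁ ≤ u, let 0 < δ ≤ 1, and let γ satisfy 0 < γ < 1/4 and γ ≤ c₀/(2α). Set k = ln(u)·γ^{−2} and N = 2·c₁^{−2}·k·ln(k/δ)·exp(8·c₂·γ²·r₁). Let S ⊆ {1,…,u} be such that the set {1,…,u−r₁} \ S has at least r elements, and let F_{r,S} denote its r smallest elements. Let H be a random hypothesis set consisting of the fixed hypothesis h₀ together with k·⌈N/k⌉ independent uniformly random vectors in {−1,1}^u. Then with probability at least 1 − δ over H, for every probability distribution D on {1,…,u} whose support is exactly S, there exists h ∈ H such that ∑_{i ∈ S} D(i)·h(i) ≥ γ/4 and, moreover, either h = h₀ or h takes the value −1 on at least (1/2 + αγ/2)·r of the points in F_{r,S}. -/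
open MeasureTheory

/-- The sign `±1` associated with a Boolean (`true ↦ 1`, `false ↦ -1`). -/
noncomputable def boolSign (b : Bool) : ℝ := if b then 1 else -1

lemma sum_cons_bool {n : ℕ} (f : (Fin (n+1) → Bool) → ℝ) :
    ∑ h, f h = ∑ h : Fin n → Bool, (f (Fin.cons true h) + f (Fin.cons false h)) := by
  rw [← (Fin.consEquiv (fun _ => Bool)).sum_comp, Fintype.sum_prod_type, Fintype.sum_bool,
    Finset.sum_add_distrib]
  rfl

noncomputable def tG {n : ℕ} (τ : Fin n → ℝ) (h : Fin n → Bool) : ℝ :=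
  ∏ i, (1 + τ i * boolSign (h i))
noncomputable def tX {n : ℕ} (w : Fin n → ℝ) (h : Fin n → Bool) : ℝ :=
  ∑ i, w i * boolSign (h i)

lemma tG_cons {n : ℕ} (τ : Fin (n+1) → ℝ) (b : Bool) (h : Fin n → Bool) :
    tG τ (Fin.cons b h : Fin (n+1) → Bool) = (1 + τ 0 * boolSign b) * tG (fun i => τ i.succ) h := by
  simp [tG, Fin.prod_univ_succ]
lemma tX_cons {n : ℕ} (τ : Fin (n+1) → ℝ) (b : Bool) (h : Fin n → Bool) :
    tX τ (Fin.cons b h : Fin (n+1) → Bool) = τ 0 * boolSign b + tX (fun i => τ i.succ) h := by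
  simp [tX, Fin.sum_univ_succ]

lemma tmoment : ∀ (n : ℕ) (w τ : Fin n → ℝ), (∀ i, 0 ≤ w i) → (∀ i, 0 ≤ τ i) →
    ∑ h, tG τ h = 2 ^ n ∧ ∑ h, tX w h * tG τ h = 2 ^ n * ∑ i, w i * τ i ∧
    0 ≤ ∑ h, tG τ h ^ 2 ∧
    ∑ h, tG τ h ^ 2 ≤ 2 ^ n * Real.exp (∑ i, τ i ^ 2) ∧
    ∑ h, tX w h * tG τ h ^ 2 ≤ 2 * (∑ i, w i * τ i) * ∑ h, tG τ h ^ 2 ∧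
    ∑ h, tX w h ^ 2 * tG τ h ^ 2 ≤
      (∑ i, w i ^ 2 + 4 * (∑ i, w i * τ i) ^ 2) * ∑ h, tG τ h ^ 2 := by
  intro n
  induction n with
  | zero => intro w τ _ _; simp [tG, tX]
  | succ n ih =>
    intro w τ hw hτ
    obtain ⟨h1, h2, h3, h4, h5, h6⟩ := ih (fun i => w i.succ) (fun i => τ i.succ)
      (fun i => hw _) (fun i => hτ _)
    have e1 : ∑ h, tG τ h = 2 * ∑ h, tG (fun i => τ i.succ) h := by
      rw [sum_cons_bool, Finset.mul_sum]
      refine Finset.sum_congr rfl fun h _ => ?_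
      simp only [tG_cons, boolSign]; simp; ring
    have e2 : ∑ h, tX w h * tG τ h = 2 * ∑ h, tX (fun i => w i.succ) h * tG (fun i => τ i.succ) h
        + 2 * (w 0 * τ 0) * ∑ h, tG (fun i => τ i.succ) h := by
      rw [sum_cons_bool, Finset.mul_sum, Finset.mul_sum, ← Finset.sum_add_distrib]
      refine Finset.sum_congr rfl fun h _ => ?_
      simp only [tG_cons, tX_cons, boolSign]; simp; ring
    have e3 : ∑ h, tG τ h ^ 2 = 2 * (1 + τ 0 ^ 2) * ∑ h, tG (fun i => τ i.succ) h ^ 2 := by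
      rw [sum_cons_bool, Finset.mul_sum]
      refine Finset.sum_congr rfl fun h _ => ?_
      simp only [tG_cons, boolSign]; simp; ring
    have e5 : ∑ h, tX w h * tG τ h ^ 2 =
        2 * (1 + τ 0 ^ 2) * ∑ h, tX (fun i => w i.succ) h * tG (fun i => τ i.succ) h ^ 2
        + 4 * (w 0 * τ 0) * ∑ h, tG (fun i => τ i.succ) h ^ 2 := by
      rw [sum_cons_bool, Finset.mul_sum, Finset.mul_sum, ← Finset.sum_add_distrib]
      refine Finset.sum_congr rfl fun h _ => ?_
      simp only [tG_cons, tX_cons, boolSign]; simp; ring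
    have e6 : ∑ h, tX w h ^ 2 * tG τ h ^ 2 =
        2 * (1 + τ 0 ^ 2) * ∑ h, tX (fun i => w i.succ) h ^ 2 * tG (fun i => τ i.succ) h ^ 2
        + 8 * (w 0 * τ 0) * ∑ h, tX (fun i => w i.succ) h * tG (fun i => τ i.succ) h ^ 2
        + 2 * w 0 ^ 2 * (1 + τ 0 ^ 2) * ∑ h, tG (fun i => τ i.succ) h ^ 2 := by
      rw [sum_cons_bool, Finset.mul_sum, Finset.mul_sum, Finset.mul_sum,
        ← Finset.sum_add_distrib, ← Finset.sum_add_distrib]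
      refine Finset.sum_congr rfl fun h _ => ?_
      simp only [tG_cons, tX_cons, boolSign]; simp; ring
    have hm : 0 ≤ ∑ i : Fin n, w i.succ * τ i.succ :=
      Finset.sum_nonneg fun i _ => mul_nonneg (hw _) (hτ _)
    have hv : 0 ≤ ∑ i : Fin n, w i.succ ^ 2 := Finset.sum_nonneg fun i _ => sq_nonneg _
    have hx : 0 ≤ w 0 * τ 0 := mul_nonneg (hw _) (hτ _)
    rw [e1, e2, e3, e5, e6, Fin.sum_univ_succ (fun i => w i * τ i),
      Fin.sum_univ_succ (fun i => w i ^ 2), Fin.sum_univ_succ (fun i => τ i ^ 2)]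
    rw [h1, h2]
    generalize (∑ h, tG (fun i => τ i.succ) h ^ 2) = A at *
    generalize (∑ h, tX (fun i => w i.succ) h * tG (fun i => τ i.succ) h ^ 2) = B at *
    generalize (∑ h, tX (fun i => w i.succ) h ^ 2 * tG (fun i => τ i.succ) h ^ 2) = C at *
    generalize (∑ i : Fin n, w i.succ * τ i.succ) = m at *
    generalize (∑ i : Fin n, w i.succ ^ 2) = v at *
    generalize hx' : w 0 * τ 0 = x at *
    have hT : 0 ≤ τ 0 ^ 2 := sq_nonneg _
    generalize τ 0 ^ 2 = T at *
    refine ⟨by ring, by ring, by positivity, ?_, ?_, ?_⟩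
    · rw [Real.exp_add]
      have : 1 + T ≤ Real.exp T := by linarith [Real.add_one_le_exp T]
      calc 2 * (1 + T) * A ≤ 2 * Real.exp T * (2 ^ n * Real.exp (∑ i : Fin n, τ i.succ ^ 2)) := by
            gcongr
        _ = _ := by ring
    · have := mul_le_mul_of_nonneg_left h5 (by positivity : 0 ≤ 2 * (1 + T))
      nlinarith [mul_nonneg (mul_nonneg hx h3) hT]
    · have t1 := mul_le_mul_of_nonneg_left h6 (by positivity : 0 ≤ 2 * (1 + T))
      have t2 := mul_le_mul_of_nonneg_left h5 (by positivity : 0 ≤ 8 * x)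
      have t3 : 0 ≤ x * m * A * T := by positivity
      have t4 : 0 ≤ x * x * A * (1 + T) := by positivity
      nlinarith

lemma boolSign_abs (b : Bool) : |boolSign b| = 1 := by cases b <;> simp [boolSign]

open scoped Classical in
lemma anticonc_tau {n : ℕ} (w τ : Fin n → ℝ) (hw : ∀ i, 0 ≤ w i) (hτ : ∀ i, 0 ≤ τ i)
    (hτ1 : ∀ i, τ i ≤ 1) (b : ℝ) (hb : 0 ≤ b) (hm : 0 < ∑ i, w i * τ i)
    (hbm : b ≤ (∑ i, w i * τ i) / 2) (hv : ∑ i, w i ^ 2 ≤ 4 * (∑ i, w i * τ i) ^ 2) :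
    2 ^ n * (Real.exp (-∑ i, τ i ^ 2) / 32) ≤
      ((Finset.univ.filter (fun h : Fin n → Bool => b ≤ tX w h)).card : ℝ) := by
  obtain ⟨h1, h2, h3, h4, h5, h6⟩ := tmoment n w τ hw hτ
  set m := ∑ i, w i * τ i
  set s := Finset.univ.filter (fun h : Fin n → Bool => b ≤ tX w h)
  have hG : ∀ h, 0 ≤ tG τ h := fun h => Finset.prod_nonneg fun i _ => by
    have := neg_abs_le (boolSign (h i)); rw [boolSign_abs] at this
    nlinarith [hτ i, hτ1 i]
  have k1 : 2 ^ n * (m / 2) ≤ ∑ h ∈ s, 1 * (tX w h * tG τ h) := by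
    calc 2 ^ n * (m / 2) ≤ 2 ^ n * (m - b) := by gcongr; linarith
      _ = ∑ h, (tX w h - b) * tG τ h := by
          simp only [sub_mul, Finset.sum_sub_distrib, ← Finset.mul_sum, h1, h2]; ring
      _ ≤ ∑ h ∈ s, 1 * (tX w h * tG τ h) := by
          rw [Finset.sum_filter]
          refine Finset.sum_le_sum fun h _ => ?_
          split_ifs with hh
          · nlinarith [hG h]
          · nlinarith [hG h]
  have k2 := Finset.sum_mul_sq_le_sq_mul_sq s (fun _ => (1:ℝ)) (fun h => tX w h * tG τ h)
  have k3 : ∑ h ∈ s, (tX w h * tG τ h) ^ 2 ≤ ∑ h, tX w h ^ 2 * tG τ h ^ 2 := by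
    simp only [← mul_pow]
    exact Finset.sum_le_sum_of_subset_of_nonneg (Finset.subset_univ _) fun _ _ _ => sq_nonneg _
  simp only [one_pow, Finset.sum_const, nsmul_eq_mul, mul_one] at k2
  have k4 : (2 ^ n * (m / 2)) ^ 2 ≤ (s.card : ℝ) * (8 * m ^ 2 * (2 ^ n * Real.exp (∑ i, τ i ^ 2))) := by
    calc (2 ^ n * (m / 2)) ^ 2 ≤ (∑ h ∈ s, 1 * (tX w h * tG τ h)) ^ 2 := by gcongr
      _ ≤ _ := k2
      _ ≤ _ := by
        gcongr
        refine k3.trans (h6.trans ?_)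
        gcongr
        linarith
  rw [Real.exp_neg]
  have hE := Real.exp_pos (∑ i, τ i ^ 2)
  have h2n : (0:ℝ) < 2 ^ n := by positivity
  rw [← sub_nonneg]
  have : 0 ≤ (m ^ 2 * 2 ^ n) * ((s.card : ℝ) * (32 * Real.exp (∑ i, τ i ^ 2)) - 2 ^ n) := by
    nlinarith
  have := nonneg_of_mul_nonneg_right this (by positivity)
  have e : (s.card : ℝ) - 2 ^ n * ((Real.exp (∑ i, τ i ^ 2))⁻¹ / 32) =
    ((s.card : ℝ) * (32 * Real.exp (∑ i, τ i ^ 2)) - 2 ^ n) / (32 * Real.exp (∑ i, τ i ^ 2)) := by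
    field_simp
  rw [e]; positivity

open scoped Classical in
lemma anticonc {n : ℕ} (w : Fin n → ℝ) (hw : ∀ i, 0 ≤ w i) (L : Finset (Fin n)) (β : ℝ)
    (hβ : 0 ≤ β) (hβ1 : β ≤ 1 / 4) :
    2 ^ n * (Real.exp (-(8 * β ^ 2 * L.card + 1 / 2)) / 32) ≤
      ((Finset.univ.filter (fun h : Fin n → Bool => β * ∑ i ∈ L, w i ≤ tX w h)).card : ℝ) := by
  have hv0 : 0 ≤ ∑ i, w i ^ 2 := Finset.sum_nonneg fun i _ => sq_nonneg _
  rcases hv0.eq_or_lt with h0 | hv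
  · have hz : ∀ i, w i = 0 := by
      have := (Finset.sum_eq_zero_iff_of_nonneg (fun i _ => sq_nonneg (w i))).1 h0.symm
      intro i; exact pow_eq_zero_iff (two_ne_zero) |>.1 (this i (Finset.mem_univ i))
    have : (Finset.univ.filter (fun h : Fin n → Bool => β * ∑ i ∈ L, w i ≤ tX w h)) = Finset.univ := by
      ext h; simp only [tX, hz, Finset.sum_const_zero, mul_zero, zero_mul, le_refl, Finset.mem_filter, Finset.mem_univ, and_self]
    rw [this]
    simp only [Finset.card_univ, Fintype.card_fun, Fintype.card_bool, Fintype.card_fin]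
    push_cast
    clear h0 hv0
    have : Real.exp (-(8 * β ^ 2 * L.card + 1 / 2)) ≤ 1 := by
      rw [Real.exp_le_one_iff]
      have : 0 ≤ 8 * β ^ 2 * (L.card : ℝ) := mul_nonneg (by nlinarith [sq_nonneg β]) (Nat.cast_nonneg _)
      linarith
    have h2n : (0:ℝ) < 2 ^ n := by positivity
    nlinarith
  set v := ∑ i, w i ^ 2 with hvdef
  have hs : 0 < √v := Real.sqrt_pos.2 hv
  have hsq : √v ^ 2 = v := Real.sq_sqrt hv.le
  have hle : ∀ i, w i ≤ √v := fun i => Real.le_sqrt_of_sq_le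
    (Finset.single_le_sum (f := fun i => w i ^ 2) (fun i _ => sq_nonneg _) (Finset.mem_univ i))
  let τ : Fin n → ℝ := fun i => (if i ∈ L then 2 * β else 0) + w i / (2 * √v)
  have hm : ∑ i, w i * τ i = 2 * β * ∑ i ∈ L, w i + √v / 2 := by
    simp only [τ, mul_add, Finset.sum_add_distrib]
    congr 1
    · rw [Finset.mul_sum]
      simp only [mul_ite, mul_zero, Finset.sum_ite_mem, Finset.univ_inter]
      exact Finset.sum_congr rfl fun i _ => mul_comm _ _
    · have : ∀ i, w i * (w i / (2 * √v)) = w i ^ 2 / (2 * √v) := fun i => by ring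
      simp only [this]
      rw [← Finset.sum_div, ← hvdef]
      nth_rw 1 [← hsq]
      field_simp
  have hWL : 0 ≤ ∑ i ∈ L, w i := Finset.sum_nonneg fun i _ => hw i
  have hτ2 : ∑ i, τ i ^ 2 ≤ 8 * β ^ 2 * L.card + 1 / 2 := by
    have : ∀ i, τ i ^ 2 ≤ (if i ∈ L then 8 * β ^ 2 else 0) + w i ^ 2 / (2 * v) := fun i => by
      have e : w i ^ 2 / (2 * v) = 2 * (w i / (2 * √v)) ^ 2 := by
        rw [div_pow, mul_pow, hsq]; field_simp
      rw [e]
      simp only [τ]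
      split_ifs
      · nlinarith [sq_nonneg (2 * β - w i / (2 * √v))]
      · nlinarith [sq_nonneg (w i / (2 * √v))]
    calc ∑ i, τ i ^ 2 ≤ ∑ i, ((if i ∈ L then 8 * β ^ 2 else 0) + w i ^ 2 / (2 * v)) :=
          Finset.sum_le_sum fun i _ => this i
      _ = _ := by
        rw [Finset.sum_add_distrib, ← Finset.sum_div, ← hvdef]
        simp only [Finset.sum_ite_mem, Finset.univ_inter, Finset.sum_const, nsmul_eq_mul]
        field_simp
  have hb0 : 0 ≤ β * ∑ i ∈ L, w i := by positivity
  have key := anticonc_tau w τ hw (fun i => by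
      have := hw i
      simp only [τ]; split_ifs <;> positivity)
    (fun i => by
      have : w i / (2 * √v) ≤ 1 / 2 := by
        rw [div_le_iff₀ (by positivity)]; linarith [hle i]
      simp only [τ]; split_ifs <;> linarith) (β * ∑ i ∈ L, w i) (by positivity)
    (by rw [hm]; nlinarith) (by rw [hm]; nlinarith) (by
      rw [hm, ← hvdef]; nlinarith)
  refine le_trans ?_ key
  gcongr

open scoped Classical in
lemma harris {n : ℕ} (A B : (Fin n → Bool) → Prop) (hA : ∀ a b, a ≤ b → A a → A b)
    (hB : ∀ a b, a ≤ b → B a → B b) :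
    ((Finset.univ.filter A).card : ℝ) * (Finset.univ.filter B).card ≤
      2 ^ n * (Finset.univ.filter (fun h => A h ∧ B h)).card := by
  have key := fkg (α := Fin n → Bool) (β := ℝ) (μ := fun _ => 1) (f := fun h => if A h then 1 else 0)
    (g := fun h => if B h then 1 else 0) (fun _ => zero_le_one)
    (fun h => by dsimp; split_ifs <;> norm_num) (fun h => by dsimp; split_ifs <;> norm_num)
    (fun a b hab => by
      dsimp; split_ifs with h1 h2 <;> first | exact absurd (hA a b hab h1) h2 | norm_num)
    (fun a b hab => by
      dsimp; split_ifs with h1 h2 <;> first | exact absurd (hB a b hab h1) h2 | norm_num)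
    (fun _ _ => le_refl _)
  have e : ∀ h, (if A h then (1:ℝ) else 0) * (if B h then 1 else 0) = if A h ∧ B h then 1 else 0 := by
    intro h; by_cases h1 : A h <;> by_cases h2 : B h <;> simp [h1, h2]
  simp only [e, one_mul, Finset.sum_boole, Finset.sum_const, Finset.card_univ, Fintype.card_fun,
    Fintype.card_bool, Fintype.card_fin, nsmul_eq_mul, mul_one] at key
  simpa using key

lemma boolSign_mono {a b : Bool} (h : a ≤ b) : boolSign a ≤ boolSign b := by
  cases a <;> cases b <;> first | exact absurd h (by decide) | norm_num [boolSign]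

lemma tX_mono {n : ℕ} (w : Fin n → ℝ) (hw : ∀ i, 0 ≤ w i) (a b : Fin n → Bool) (h : a ≤ b) :
    tX w a ≤ tX w b :=
  Finset.sum_le_sum fun i _ => mul_le_mul_of_nonneg_left (boolSign_mono (h i)) (hw i)

open scoped Classical in
lemma pcount {n : ℕ} (w : Fin n → ℝ) (hw : ∀ i, 0 ≤ w i) (L F : Finset (Fin n))
    (hF : ∀ i ∈ F, w i = 0) (β1 β2 : ℝ)
    (h1 : 0 ≤ β1) (h1' : β1 ≤ 1 / 4) (h2 : 0 ≤ β2) (h2' : β2 ≤ 1 / 4) :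
    2 ^ n * ((Real.exp (-(8 * β1 ^ 2 * L.card + 1 / 2)) / 32) *
      (Real.exp (-(8 * β2 ^ 2 * F.card + 1 / 2)) / 32)) ≤
      ((Finset.univ.filter (fun h : Fin n → Bool => β1 * ∑ i ∈ L, w i ≤ tX w h ∧
        β2 * F.card ≤ ∑ i ∈ F, - boolSign (h i))).card : ℝ) := by
  set v : Fin n → ℝ := fun i => if i ∈ F then 1 else 0 with hvd
  have hv : ∀ i, 0 ≤ v i := fun i => by simp only [v]; split_ifs <;> norm_num
  have a1 := anticonc w hw L β1 h1 h1'
  have a2 := anticonc v hv F β2 h2 h2'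
  have hvF : ∑ i ∈ F, v i = F.card := by simp [v]
  rw [hvF] at a2
  have H := harris (fun h : Fin n → Bool => β1 * ∑ i ∈ L, w i ≤ tX w h)
    (fun h => β2 * F.card ≤ tX v h)
    (fun a b hab h => h.trans (tX_mono w hw a b hab))
    (fun a b hab h => h.trans (tX_mono v hv a b hab))
  let fl : (Fin n → Bool) → (Fin n → Bool) := fun h i => if i ∈ F then !(h i) else h i
  have hfl : ∀ h, fl (fl h) = h := fun h => by
    funext i; simp only [fl]; split_ifs <;> simp
  have hcard : (Finset.univ.filter (fun h : Fin n → Bool => β1 * ∑ i ∈ L, w i ≤ tX w h ∧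
      β2 * F.card ≤ tX v h)).card ≤
      (Finset.univ.filter (fun h : Fin n → Bool => β1 * ∑ i ∈ L, w i ≤ tX w h ∧
        β2 * F.card ≤ ∑ i ∈ F, - boolSign (h i))).card := by
    refine Finset.card_le_card_of_injOn fl ?_ (fun a _ b _ hab => by
      rw [← hfl a, hab, hfl])
    intro h hh
    simp only [Finset.coe_filter, Finset.mem_univ, true_and, Set.mem_ofPred_eq] at hh ⊢
    have e1 : tX w (fl h) = tX w h := Finset.sum_congr rfl fun i _ => by
      by_cases hi : i ∈ F
      · simp [hF i hi]
      · simp [fl, hi]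
    have e2 : ∑ i ∈ F, - boolSign (fl h i) = tX v h := by
      simp only [tX, v, ite_mul, one_mul, zero_mul, Finset.sum_ite_mem, Finset.univ_inter]
      refine Finset.sum_congr rfl fun i hi => ?_
      simp only [fl, hi, if_true]
      cases h i <;> simp [boolSign]
    rw [e1, e2]; exact hh
  have hcard' : ((Finset.univ.filter (fun h : Fin n → Bool => β1 * ∑ i ∈ L, w i ≤ tX w h ∧
      β2 * F.card ≤ tX v h)).card : ℝ) ≤ _ := Nat.cast_le.2 hcard
  refine le_trans ?_ hcard'
  have h2n : (0:ℝ) < 2 ^ n := by positivity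
  have := (mul_le_mul a1 a2 (by positivity) (by positivity)).trans H
  refine le_of_mul_le_mul_left (le_trans (le_of_eq ?_) this) h2n
  ring

open scoped Classical in
lemma blockcount {Ω : Type*} [Fintype Ω] (m : ℕ) (P : Ω → Prop) (p : ℝ)
    (h : (Fintype.card Ω : ℝ) * p ≤ (Finset.univ.filter P).card) :
    (Fintype.card Ω : ℝ) ^ m * (1 - Real.exp (-p * m)) ≤
      ((Finset.univ.filter (fun g : Fin m → Ω => ∃ t, P (g t))).card : ℝ) := by
  have e1 := Finset.card_filter_add_card_filter_not (s := (Finset.univ : Finset (Fin m → Ω)))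
    (fun g => ∃ t, P (g t))
  have e2 := Finset.card_filter_add_card_filter_not (s := (Finset.univ : Finset Ω)) P
  have e3 : (Finset.univ.filter (fun g : Fin m → Ω => ¬ ∃ t, P (g t))) =
      Fintype.piFinset (fun _ => Finset.univ.filter (fun x => ¬ P x)) := by
    ext g; simp [Fintype.mem_piFinset]
  rw [e3, Fintype.card_piFinset_const] at e1
  simp only [Finset.card_univ, Fintype.card_fun, Fintype.card_fin] at e1 e2
  set a := (Finset.univ.filter (fun g : Fin m → Ω => ∃ t, P (g t))).card
  set b := (Finset.univ.filter (fun x => ¬ P x)).card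
  set c := (Finset.univ.filter P).card
  have e1' : (a : ℝ) + (b : ℝ) ^ m = (Fintype.card Ω : ℝ) ^ m := by exact_mod_cast e1
  have e2' : (c : ℝ) + b = Fintype.card Ω := by exact_mod_cast e2
  have hb : (b : ℝ) ≤ Fintype.card Ω * Real.exp (-p) := by
    have := Real.add_one_le_exp (-p)
    have h0 : (0:ℝ) ≤ Fintype.card Ω := by positivity
    nlinarith
  have : (b : ℝ) ^ m ≤ (Fintype.card Ω : ℝ) ^ m * Real.exp (-p * m) := by
    calc (b : ℝ) ^ m ≤ (Fintype.card Ω * Real.exp (-p)) ^ m := by gcongr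
      _ = _ := by rw [mul_pow, ← Real.exp_nat_mul]; ring_nf
  linarith

open scoped Classical in
lemma boost {Ω : Type*} [Fintype Ω] {n : ℕ} (V : Ω → (Fin n → ℝ) → Prop) (S : Finset (Fin n))
    (hV : ∀ g f, V g f → ∀ i, |f i| ≤ 1) (γ : ℝ) (hγ : 0 ≤ γ) (hγ1 : γ ≤ 1) (s : ℝ) (hs : 0 ≤ s)
    (hblock : ∀ w : Fin n → ℝ, (∀ i, 0 ≤ w i) → (∀ i, i ∉ S → w i = 0) →
      s ≤ (Finset.univ.filter (fun g => ∃ f, V g f ∧ 3 * γ * ∑ i, w i ≤ ∑ i, w i * f i)).card) :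
    ∀ (K : ℕ) (w : Fin n → ℝ), (∀ i, 0 ≤ w i) → (∀ i, i ∉ S → w i = 0) →
      s ^ K ≤ (Finset.univ.filter (fun g : Fin K → Ω => ∃ f : Fin K → Fin n → ℝ,
        (∀ j, V (g j) (f j)) ∧ ∑ i, w i * Real.exp (-γ * ∑ j, f j i) ≤
          Real.exp (-2 * γ ^ 2) ^ K * ∑ i, w i)).card := by
  intro K
  induction K with
  | zero => intro w _ _; simp
  | succ K ih =>
    intro w hw hwS
    set P : (Fin (K+1) → Ω) → Prop := fun g => ∃ f : Fin (K+1) → Fin n → ℝ,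
        (∀ j, V (g j) (f j)) ∧ ∑ i, w i * Real.exp (-γ * ∑ j, f j i) ≤
          Real.exp (-2 * γ ^ 2) ^ (K+1) * ∑ i, w i with hP
    set Q : Ω → Prop := fun g => ∃ f, V g f ∧ 3 * γ * ∑ i, w i ≤ ∑ i, w i * f i with hQ
    have step : ∀ g0, Q g0 → s ^ K ≤
        ((Finset.univ.filter (fun g' : Fin K → Ω => P (Fin.cons g0 g'))).card : ℝ) := by
      rintro g0 ⟨f0, hf0, hadv⟩
      refine (ih (fun i => w i * Real.exp (-γ * f0 i)) (fun i => mul_nonneg (hw i) (Real.exp_pos _).le)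
        (fun i hi => by simp [hwS i hi])).trans ?_
      refine Nat.cast_le.2 (Finset.card_le_card ?_)
      intro g' hg'
      simp only [Finset.mem_filter, Finset.mem_univ, true_and] at hg' ⊢
      obtain ⟨f, hf, hle⟩ := hg'
      refine ⟨Fin.cons f0 f, ?_, ?_⟩
      · intro j
        refine Fin.cases ?_ (fun j => ?_) j
        · simpa using hf0
        · simpa using hf j
      · have e1 : ∀ i, w i * Real.exp (-γ * ∑ j, (Fin.cons f0 f : Fin (K+1) → Fin n → ℝ) j i) =
            w i * Real.exp (-γ * f0 i) * Real.exp (-γ * ∑ j, f j i) := fun i => by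
          rw [Fin.sum_univ_succ]
          simp only [Fin.cons_zero, Fin.cons_succ]
          rw [mul_add, Real.exp_add]; ring
        simp only [e1]
        refine hle.trans ?_
        rw [pow_succ (Real.exp (-2 * γ ^ 2)) K, mul_assoc]
        refine mul_le_mul_of_nonneg_left ?_ (by positivity)
        have e2 : ∀ i, w i * Real.exp (-γ * f0 i) ≤ w i * (1 + γ ^ 2) - γ * (w i * f0 i) := fun i => by
          have hf1 := hV g0 f0 hf0 i
          have hx : |(-γ * f0 i)| ≤ 1 := by
            rw [abs_mul, abs_neg, abs_of_nonneg hγ]; nlinarith [abs_nonneg (f0 i)]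
          have h1 := (abs_le.1 (Real.abs_exp_sub_one_sub_id_le hx)).2
          have h2 : (-γ * f0 i) ^ 2 ≤ γ ^ 2 := by
            have := (sq_le_one_iff_abs_le_one _).2 hf1
            nlinarith [sq_nonneg γ]
          nlinarith [hw i, mul_le_mul_of_nonneg_left (h1.trans h2) (hw i)]
        calc ∑ i, w i * Real.exp (-γ * f0 i) ≤ ∑ i, (w i * (1 + γ ^ 2) - γ * (w i * f0 i)) :=
              Finset.sum_le_sum fun i _ => e2 i
          _ = (∑ i, w i) * (1 + γ ^ 2) - γ * ∑ i, w i * f0 i := by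
              rw [Finset.sum_sub_distrib, Finset.sum_mul, Finset.mul_sum]
          _ ≤ (∑ i, w i) * (1 - 2 * γ ^ 2) := by nlinarith [mul_le_mul_of_nonneg_left hadv hγ]
          _ ≤ (∑ i, w i) * Real.exp (-2 * γ ^ 2) := by
              refine mul_le_mul_of_nonneg_left ?_ (Finset.sum_nonneg fun i _ => hw i)
              linarith [Real.add_one_le_exp (-2 * γ ^ 2)]
          _ = _ := mul_comm _ _
    have hcount : ((Finset.univ.filter P).card : ℝ) =
        ∑ g0, ((Finset.univ.filter (fun g' : Fin K → Ω => P (Fin.cons g0 g'))).card : ℝ) := by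
      simp only [← Finset.sum_boole]
      rw [← (Fin.consEquiv (fun _ => Ω)).sum_comp, Fintype.sum_prod_type]
      rfl
    rw [hcount]
    calc s ^ (K+1) = s * s ^ K := by ring
      _ ≤ ((Finset.univ.filter Q).card : ℝ) * s ^ K := by
          gcongr; exact hblock w hw hwS
      _ = ∑ g0 ∈ Finset.univ.filter Q, s ^ K := by simp
      _ ≤ ∑ g0 ∈ Finset.univ.filter Q,
          ((Finset.univ.filter (fun g' : Fin K → Ω => P (Fin.cons g0 g'))).card : ℝ) :=
          Finset.sum_le_sum fun g0 hg => step g0 (by simpa using hg)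
      _ ≤ _ := Finset.sum_le_sum_of_subset_of_nonneg (Finset.subset_univ _) fun _ _ _ => by positivity

open scoped Classical in
lemma rank_card {n : ℕ} (T : Finset (Fin n)) (r : ℝ) (hr : 0 ≤ r) (hT : r ≤ T.card) :
    r ≤ (T.filter (fun i => ((T.filter (fun j => j < i)).card : ℝ) < r)).card ∧
    ((T.filter (fun i => ((T.filter (fun j => j < i)).card : ℝ) < r)).card : ℝ) ≤ r + 1 := by
  set F := T.filter (fun i => ((T.filter (fun j => j < i)).card : ℝ) < r) with hF
  constructor
  · by_cases hne : (T \ F).Nonempty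
    · set i := (T \ F).min' hne
      have hi : i ∈ T \ F := Finset.min'_mem _ hne
      rw [Finset.mem_sdiff] at hi
      have h1 : r ≤ (T.filter (fun j => j < i)).card := by
        by_contra hc
        exact hi.2 (Finset.mem_filter.2 ⟨hi.1, not_le.1 hc⟩)
      refine h1.trans (Nat.cast_le.2 (Finset.card_le_card ?_))
      intro j hj
      rw [Finset.mem_filter] at hj
      by_contra hc
      exact absurd (Finset.min'_le _ j (Finset.mem_sdiff.2 ⟨hj.1, hc⟩)) (not_le.2 hj.2)
    · rw [Finset.not_nonempty_iff_eq_empty, Finset.sdiff_eq_empty_iff_subset] at hne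
      exact hT.trans (Nat.cast_le.2 (Finset.card_le_card hne))
  · by_cases hne : F.Nonempty
    · set i := F.max' hne
      have hi : i ∈ F := Finset.max'_mem _ hne
      have h1 : F ⊆ insert i (T.filter (fun j => j < i)) := by
        intro j hj
        rw [Finset.mem_insert, Finset.mem_filter]
        rcases (Finset.le_max' F j hj).eq_or_lt with h | h
        · exact Or.inl h
        · exact Or.inr ⟨(Finset.mem_filter.1 hj).1, h⟩
      have h2 := (Finset.card_le_card h1).trans (Finset.card_insert_le _ _)
      have h3 : (F.card : ℝ) ≤ (T.filter (fun j => j < i)).card + 1 := by exact_mod_cast h2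
      have := (Finset.mem_filter.1 hi).2
      linarith
    · rw [Finset.not_nonempty_iff_eq_empty] at hne
      rw [hne]; simp; linarith

open scoped Classical in
lemma last_card {u : ℕ} (r1 : ℝ) (hr : 0 ≤ r1) :
    ((Finset.univ.filter (fun i : Fin u => ¬ ((i : ℕ) + 1 : ℝ) ≤ (u : ℝ) - r1)).card : ℝ) ≤ r1 + 1 := by
  set L := Finset.univ.filter (fun i : Fin u => ¬ ((i : ℕ) + 1 : ℝ) ≤ (u : ℝ) - r1)
  by_cases hne : L.Nonempty
  · set i := L.min' hne
    have hi : i ∈ L := Finset.min'_mem _ hne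
    have h1 : L ⊆ Finset.Ici i := fun j hj => Finset.mem_Ici.2 (Finset.min'_le _ j hj)
    have h2 := Finset.card_le_card h1
    rw [Fin.card_Ici] at h2
    have h3 := (Finset.mem_filter.1 hi).2
    have h4 : (L.card : ℝ) + (i : ℕ) ≤ u := by
      have := i.2
      exact_mod_cast (by omega : L.card + (i : ℕ) ≤ u)
    linarith
  · rw [Finset.not_nonempty_iff_eq_empty] at hne
    rw [hne]; simp; linarith

set_option maxHeartbeats 4000000 in
open scoped Classical in
/-- A random hypothesis set `H` consisting of `h₀` together with
`k·⌈N/k⌉` i.i.d. uniform vectors in `{-1,1}^u` is, with probability at least `1 - δ`,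
an *adversarial* weak-learner hypothesis set on `S`: for every distribution `D`
supported exactly on `S`, some `h ∈ H` has advantage at least `γ/4` under `D` and is
either `h₀` or has at least `(1/2 + αγ/2)·r` minus signs on the `r` smallest points
of `{1,…,u−r₁} \ S`. -/
theorem adaboost_adversarial_hypothesis_set :
    ∃ c0 c1 c2 : ℝ, 0 < c0 ∧ c0 ≤ 1 ∧ 0 < c1 ∧ c1 ≤ 1 ∧ 1 ≤ c2 ∧
      ∀ (u : ℕ), 2 ≤ u → ∀ r r1 α γ δ : ℝ,
        0 ≤ r → 0 ≤ r1 → 1 ≤ α → r1 = α ^ 2 * r → r1 ≤ (u : ℝ) →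
        0 < δ → δ ≤ 1 → 0 < γ → γ < 1 / 4 → γ ≤ c0 / (2 * α) →
        ∀ k N : ℝ, k = Real.log u * (γ ^ 2)⁻¹ →
          N = 2 * (c1 ^ 2)⁻¹ * k * Real.log (k / δ) * Real.exp (8 * c2 * γ ^ 2 * r1) →
        ∀ M : ℕ, M = ⌈k⌉₊ * ⌈N / k⌉₊ →
        ∀ h0 : Fin u → ℝ,
          h0 = (fun (i : Fin u) => if ((i : ℕ) + 1 : ℝ) ≤ (u : ℝ) - r1 then 1 else -1) →
        ∀ S : Finset (Fin u),
        ∀ T : Finset (Fin u),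
          T = Finset.univ.filter
            (fun (i : Fin u) => ((i : ℕ) + 1 : ℝ) ≤ (u : ℝ) - r1 ∧ i ∉ S) →
        r ≤ (T.card : ℝ) →
        ∀ F : Finset (Fin u),
          F = T.filter (fun i => ((T.filter (fun j => j < i)).card : ℝ) < r) →
        ENNReal.ofReal (1 - δ) ≤
          (PMF.uniformOfFintype (Fin M → Fin u → Bool)).toMeasure
            {g | ∀ H : Set (Fin u → ℝ),
              H = insert h0 {f | ∃ t : Fin M, f = fun i => boolSign (g t i)} →
              ∀ D : Fin u → ℝ, (∀ i, 0 ≤ D i) → ∑ i, D i = 1 →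
                (∀ i, 0 < D i ↔ i ∈ S) →
                ∃ f ∈ H, γ / 4 ≤ (∑ i ∈ S, D i * f i) ∧
                  (f = h0 ∨
                    (1 / 2 + α * γ / 2) * r ≤ ((F.filter (fun i => f i = -1)).card : ℝ))} := by
  refine ⟨1 / 24, Real.exp (-1) / 32, 145, by norm_num, by norm_num, by positivity, ?_, by norm_num, ?_⟩
  · have : Real.exp (-1) ≤ 1 := by rw [Real.exp_le_one_iff]; norm_num
    linarith
  intro u hu r r1 α γ δ hr hr1 hα hr1α hr1u hδ hδ1 hγ hγ4 hγα k N hk hN M hM h0 hh0 S T hT hrT F hF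
  -- numeric facts
  have hαγ : α * γ ≤ 1 / 48 := by
    rw [le_div_iff₀ (by linarith)] at hγα
    linarith
  have hαγ0 : 0 ≤ α * γ := by positivity
  have hγ48 : γ ≤ 1 / 48 := by nlinarith
  have hlog : 1 / 2 ≤ Real.log u := by
    have h1 : Real.log 2 ≤ Real.log u := Real.log_le_log (by norm_num) (by exact_mod_cast hu)
    linarith [Real.log_two_gt_d9]
  have hγ2 : 0 < γ ^ 2 := by positivity
  have hkγ : k * γ ^ 2 = Real.log u := by rw [hk]; field_simp
  have hk2 : 2 ≤ k := by
    by_contra hc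
    push Not at hc
    have : γ ^ 2 ≤ 1 / 16 := by nlinarith
    nlinarith
  set K := ⌈k⌉₊ with hKdef
  set m := ⌈N / k⌉₊ with hmdef
  have hkK : k ≤ K := Nat.le_ceil k
  have hKk : (K : ℝ) ≤ k + 1 := (Nat.ceil_lt_add_one (by linarith)).le
  have hK0 : (0:ℝ) < K := by linarith
  set p : ℝ := (Real.exp (-1) / 32) ^ 2 * Real.exp (-(1160 * γ ^ 2 * r1)) with hp
  have hp0 : 0 < p := by positivity
  have hlogkd : 0 ≤ Real.log (k / δ) := Real.log_nonneg (by rw [le_div_iff₀ hδ]; linarith)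
  have hpm : 2 * Real.log (k / δ) ≤ p * m := by
    have h1 : N / k ≤ m := Nat.le_ceil _
    have h2 : p * (N / k) = 2 * Real.log (k / δ) := by
      have hk0 : k ≠ 0 := by linarith
      have e : Real.exp (8 * 145 * γ ^ 2 * r1) = (Real.exp (-(1160 * γ ^ 2 * r1)))⁻¹ := by
        rw [Real.exp_neg, inv_inv]; norm_num
      have h3 := (Real.exp_pos (-(1160 * γ ^ 2 * r1))).ne'
      have h4 : (Real.exp (-1) / 32) ^ 2 ≠ 0 := by positivity
      rw [hN, hp, e]
      generalize Real.exp (-(1160 * γ ^ 2 * r1)) = X at *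
      generalize (Real.exp (-1) / 32) ^ 2 = Y at *
      field_simp
    rw [← h2]; gcongr
  have hq : K * Real.exp (-p * m) ≤ δ := by
    have h1 : Real.exp (-p * m) ≤ (δ / k) ^ 2 := by
      have : -p * m ≤ -(2 * Real.log (k / δ)) := by linarith
      refine (Real.exp_le_exp.2 this).trans (le_of_eq ?_)
      have e : -(2 * Real.log (k / δ)) = Real.log ((δ / k) ^ 2) := by
        rw [Real.log_pow, ← inv_div k δ, Real.log_inv]; push_cast; ring
      rw [e, Real.exp_log (by positivity)]
    calc K * Real.exp (-p * m) ≤ (k + 1) * (δ / k) ^ 2 := by gcongr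
      _ ≤ k ^ 2 * (δ / k) ^ 2 := by gcongr; nlinarith
      _ = δ ^ 2 := by field_simp
      _ ≤ δ := by nlinarith
  -- cardinalities
  obtain ⟨hF1, hF2⟩ := rank_card T r hr hrT
  rw [← hF] at hF1 hF2
  set L := Finset.univ.filter (fun i : Fin u => ¬ ((i : ℕ) + 1 : ℝ) ≤ (u : ℝ) - r1) with hL
  have hL1 : (L.card : ℝ) ≤ r1 + 1 := last_card r1 hr1
  have hFS : ∀ i ∈ F, i ∉ S := by
    intro i hi
    rw [hF, Finset.mem_filter, hT, Finset.mem_filter] at hi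
    exact hi.1.2.2
  let V : (Fin m → Fin u → Bool) → (Fin u → ℝ) → Prop := fun g f => f = h0 ∨
    ((∃ t, f = fun i => boolSign (g t i)) ∧
      (1 / 2 + α * γ / 2) * r ≤ ((F.filter (fun i => f i = -1)).card : ℝ))
  have hV : ∀ g f, V g f → ∀ i, |f i| ≤ 1 := by
    rintro g f (rfl | ⟨⟨t, rfl⟩, _⟩) i
    · rw [hh0]; dsimp only; split_ifs <;> norm_num
    · exact (boolSign_abs _).le
  have hcardΩ : (Fintype.card (Fin u → Bool) : ℝ) = 2 ^ u := by simp
  have hq1 : 0 ≤ 1 - Real.exp (-p * m) := by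
    have : Real.exp (-p * m) ≤ 1 := by
      rw [Real.exp_le_one_iff]
      have : 0 ≤ p * m := by positivity
      linarith
    linarith
  have hblock : ∀ w : Fin u → ℝ, (∀ i, 0 ≤ w i) → (∀ i, i ∉ S → w i = 0) →
      (Fintype.card (Fin u → Bool) : ℝ) ^ m * (1 - Real.exp (-p * m)) ≤
      (Finset.univ.filter (fun g => ∃ f, V g f ∧ 3 * γ * ∑ i, w i ≤ ∑ i, w i * f i)).card := by
    intro w hw hwS
    by_cases hadv : 3 * γ * ∑ i, w i ≤ ∑ i, w i * h0 i
    · have : (Finset.univ.filter (fun g => ∃ f, V g f ∧ 3 * γ * ∑ i, w i ≤ ∑ i, w i * f i)) =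
          Finset.univ := by
        rw [Finset.filter_true_of_mem]
        intro g _
        exact ⟨h0, Or.inl rfl, hadv⟩
      rw [this, Finset.card_univ, Fintype.card_fun (α := Fin m), Fintype.card_fin]
      push_cast
      have h1 := Real.exp_pos (-p * m)
      have h2 : (0:ℝ) ≤ (Fintype.card (Fin u → Bool) : ℝ) ^ m := by positivity
      nlinarith
    · push Not at hadv
      have hsplit : ∑ i, w i * h0 i = ∑ i, w i - 2 * ∑ i ∈ L, w i := by
        rw [hL, Finset.sum_filter, Finset.mul_sum, ← Finset.sum_sub_distrib]
        refine Finset.sum_congr rfl fun i _ => ?_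
        rw [hh0]; dsimp only
        by_cases hc : ((i : ℕ) + 1 : ℝ) ≤ (u : ℝ) - r1
        · simp [hc]
        · simp only [hc, if_false, not_false_eq_true, if_true]; ring
      have hW : 0 ≤ ∑ i, w i := Finset.sum_nonneg fun i _ => hw i
      have hWL : 3 * γ * ∑ i, w i ≤ 12 * γ * ∑ i ∈ L, w i := by
        have a1 : γ * ∑ i, w i ≤ 1 / 48 * ∑ i, w i := mul_le_mul_of_nonneg_right hγ48 hW
        have a2 : ∑ i, w i ≤ 4 * ∑ i ∈ L, w i := by linarith
        have a3 := mul_le_mul_of_nonneg_left a2 (by positivity : 0 ≤ 3 * γ)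
        linarith
      have hpc := pcount w hw L F (fun i hi => hwS i (hFS i hi)) (12 * γ) (α * γ) (by positivity)
        (by linarith) hαγ0 (by linarith)
      have hpp : p ≤ (Real.exp (-(8 * (12 * γ) ^ 2 * L.card + 1 / 2)) / 32) *
          (Real.exp (-(8 * (α * γ) ^ 2 * F.card + 1 / 2)) / 32) := by
        have e1 : p = Real.exp (-2 - 1160 * γ ^ 2 * r1) / 1024 := by
          rw [hp, div_pow, ← Real.exp_nat_mul, sub_eq_add_neg, Real.exp_add]
          norm_num
          ring
        have e2 : (Real.exp (-(8 * (12 * γ) ^ 2 * L.card + 1 / 2)) / 32) *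
          (Real.exp (-(8 * (α * γ) ^ 2 * F.card + 1 / 2)) / 32) =
          Real.exp (-(8 * (12 * γ) ^ 2 * L.card + 1 / 2) + -(8 * (α * γ) ^ 2 * F.card + 1 / 2)) / 1024 := by
          rw [Real.exp_add]; ring
        rw [e1, e2]
        gcongr
        have i1 : 8 * (12 * γ) ^ 2 * (L.card : ℝ) ≤ 8 * (12 * γ) ^ 2 * (r1 + 1) := by gcongr
        have i2 : 8 * (α * γ) ^ 2 * (F.card : ℝ) ≤ 8 * (α * γ) ^ 2 * (r + 1) := by gcongr
        have i3 : (α * γ) ^ 2 * r = γ ^ 2 * r1 := by rw [hr1α]; ring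
        have i4 : γ ^ 2 ≤ (1 / 48) ^ 2 := by gcongr
        have i5 : (α * γ) ^ 2 ≤ (1 / 48) ^ 2 := by gcongr
        nlinarith
      have hP := blockcount m (fun h : Fin u → Bool => 12 * γ * ∑ i ∈ L, w i ≤ tX w h ∧
        α * γ * F.card ≤ ∑ i ∈ F, - boolSign (h i)) p (by
          rw [hcardΩ]
          refine le_trans ?_ (hpc.trans (le_of_eq (by congr!)))
          gcongr)
      refine hP.trans (Nat.cast_le.2 (Finset.card_le_card ?_))
      intro g hg
      simp only [Finset.mem_filter, Finset.mem_univ, true_and] at hg ⊢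
      obtain ⟨t, ht1, ht2⟩ := hg
      refine ⟨fun i => boolSign (g t i), Or.inr ⟨⟨t, rfl⟩, ?_⟩, hWL.trans ht1⟩
      have e : ∑ i ∈ F, - boolSign (g t i) =
          2 * ((F.filter (fun i => boolSign (g t i) = -1)).card : ℝ) - F.card := by
        rw [← Finset.sum_boole, Finset.mul_sum, Finset.card_eq_sum_ones]
        push_cast
        rw [← Finset.sum_sub_distrib]
        refine Finset.sum_congr rfl fun i _ => ?_
        cases g t i <;> norm_num [boolSign]
      rw [e] at ht2
      have h3 : (1 / 2 + α * γ / 2) * r ≤ (1 / 2 + α * γ / 2) * F.card := by gcongr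
      linarith
  have hboost := boost V S hV γ hγ.le (by linarith) _ (by positivity) hblock K
    (fun i => if i ∈ S then 1 else 0) (fun i => by split_ifs <;> norm_num)
    (fun i hi => by simp [hi])
  set Succ := Finset.univ.filter (fun g : Fin K → Fin m → Fin u → Bool => ∃ f : Fin K → Fin u → ℝ,
        (∀ j, V (g j) (f j)) ∧
        ∑ i, (if i ∈ S then (1:ℝ) else 0) * Real.exp (-γ * ∑ j, f j i) ≤
          Real.exp (-2 * γ ^ 2) ^ K * ∑ i, (if i ∈ S then (1:ℝ) else 0)) with hSucc
  subst hM
  let E : (Fin (K * m) → Fin u → Bool) ≃ (Fin K → Fin m → Fin u → Bool) :=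
    (Equiv.arrowCongr finProdFinEquiv.symm (Equiv.refl _)).trans (Equiv.curry _ _ _)
  set G : Set (Fin (K * m) → Fin u → Bool) := {g | ∀ H : Set (Fin u → ℝ),
              H = insert h0 {f | ∃ t : Fin (K * m), f = fun i => boolSign (g t i)} →
              ∀ D : Fin u → ℝ, (∀ i, 0 ≤ D i) → ∑ i, D i = 1 →
                (∀ i, 0 < D i ↔ i ∈ S) →
                ∃ f ∈ H, γ / 4 ≤ (∑ i ∈ S, D i * f i) ∧
                  (f = h0 ∨
                    (1 / 2 + α * γ / 2) * r ≤ ((F.filter (fun i => f i = -1)).card : ℝ))} with hG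
  have hsub : ∀ g, E g ∈ Succ → g ∈ G := by
    intro g hg
    rw [hSucc, Finset.mem_filter] at hg
    obtain ⟨f, hf, hle⟩ := hg.2
    rintro H rfl D hD hD1 hDS
    have hmargin : ∀ i ∈ S, K * γ ≤ ∑ j, f j i := by
      intro i hi
      have h1 : Real.exp (-γ * ∑ j, f j i) ≤
          ∑ i, (if i ∈ S then (1:ℝ) else 0) * Real.exp (-γ * ∑ j, f j i) := by
        have := Finset.single_le_sum
          (f := fun i => (if i ∈ S then (1:ℝ) else 0) * Real.exp (-γ * ∑ j, f j i))
          (fun i _ => by split_ifs <;> positivity) (Finset.mem_univ i)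
        simpa [hi] using this
      have h2 : ∑ i : Fin u, (if i ∈ S then (1:ℝ) else 0) ≤ u := by
        rw [Finset.sum_boole]
        have := Finset.card_le_univ (Finset.univ.filter (fun i : Fin u => i ∈ S))
        rw [Fintype.card_fin] at this
        exact_mod_cast this
      have hu0 : (0:ℝ) < u := by exact_mod_cast (by omega : 0 < u)
      have h3 : Real.exp (-γ * ∑ j, f j i) ≤ Real.exp (K * (-2 * γ ^ 2) + Real.log u) := by
        rw [Real.exp_add, Real.exp_log hu0, Real.exp_nat_mul]
        refine h1.trans (hle.trans ?_)
        gcongr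
      rw [Real.exp_le_exp, ← hkγ] at h3
      have h4 : k * γ ^ 2 ≤ K * γ ^ 2 := by gcongr
      have h5 : γ * (K * γ) ≤ γ * ∑ j, f j i := by nlinarith
      exact le_of_mul_le_mul_left h5 hγ
    have hDsum : ∑ i ∈ S, D i = 1 := by
      rw [← hD1]
      refine Finset.sum_subset (Finset.subset_univ _) fun i _ hi => ?_
      exact le_antisymm (not_lt.1 fun h => hi ((hDS i).1 h)) (hD i)
    have hex : ∃ j, γ / 4 ≤ ∑ i ∈ S, D i * f j i := by
      by_contra hc
      push Not at hc
      have h1 : ∑ j, ∑ i ∈ S, D i * f j i ≤ ∑ j : Fin K, γ / 4 :=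
        Finset.sum_le_sum fun j _ => (hc j).le
      rw [Finset.sum_comm] at h1
      have h2 : ∑ i ∈ S, D i * (K * γ) ≤ ∑ i ∈ S, ∑ j, D i * f j i := by
        refine Finset.sum_le_sum fun i hi => ?_
        rw [← Finset.mul_sum]
        exact mul_le_mul_of_nonneg_left (hmargin i hi) (hD i)
      rw [← Finset.sum_mul, hDsum] at h2
      simp only [Finset.sum_const, Finset.card_univ, Fintype.card_fin, nsmul_eq_mul] at h1
      have : 0 < K * γ := by positivity
      linarith
    obtain ⟨j, hj⟩ := hex
    rcases hf j with h | ⟨⟨t, ht⟩, hA⟩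
    · exact ⟨f j, Or.inl h, hj, Or.inl h⟩
    · exact ⟨f j, Or.inr ⟨finProdFinEquiv (j, t), ht⟩, hj, Or.inr hA⟩
  have hcard : (Succ.card : ℝ) ≤ (Fintype.card G : ℝ) := by
    have : Succ.card ≤ G.toFinset.card := by
      refine Finset.card_le_card_of_injOn E.symm ?_ (fun a _ b _ hab => E.symm.injective hab)
      intro x hx
      rw [Set.coe_toFinset]
      exact hsub _ (by simpa using hx)
    rw [Set.toFinset_card] at this
    exact_mod_cast this
  rw [PMF.toMeasure_uniformOfFintype_apply _ (Set.toFinite G).measurableSet]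
  have hbern : 1 - δ ≤ (1 - Real.exp (-p * m)) ^ K := by
    have h1 := one_add_mul_le_pow (a := -Real.exp (-p * m)) (by linarith) K
    rw [← sub_eq_add_neg] at h1
    linarith
  have hfinal : (1 - δ) * (Fintype.card (Fin (K * m) → Fin u → Bool) : ℝ) ≤ Fintype.card G := by
    refine le_trans ?_ (hboost.trans hcard)
    rw [mul_pow, ← pow_mul, Fintype.card_fun (α := Fin (K * m)), Fintype.card_fin, mul_comm,
      mul_comm K m]
    push_cast
    gcongr
  have hcpos : 0 < (Fintype.card (Fin (K * m) → Fin u → Bool)) := Fintype.card_pos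
  rw [ENNReal.le_div_iff_mul_le (Or.inl (by exact_mod_cast hcpos.ne')) (Or.inl (ENNReal.natCast_ne_top _)),
    ← ENNReal.ofReal_natCast, ← ENNReal.ofReal_natCast, ← ENNReal.ofReal_mul (by linarith)]
  exact ENNReal.ofReal_le_ofReal hfinal
end

section
/- Let S be a nonempty finite set, D a probability distribution on S, h: S → {−1,1} a function, and 0 < γ < 1/2 a real. Set η = (1/2)·ln((1+2γ)/(1−2γ)). If ∑_{i ∈ S} D(i)·h(i) ≥ 2γ, then ∑_{i ∈ S} D(i)·exp(−η·h(i)) ≤ 1 − 2γ². -/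
/-- Normalization-factor bound for one round of the AdaBoost-style
multiplicative weights update: if `h` has advantage `2γ` under `D`, then the
normalization factor `∑ D(i)·exp(−η·h(i))` is at most `1 − 2γ²`. -/
theorem adaboost_normalization_bound
    {ι : Type*} (S : Finset ι) (hS : S.Nonempty)
    (D : ι → ℝ) (hD0 : ∀ i ∈ S, 0 ≤ D i) (hD1 : ∀ i ∈ S, D i ≤ 1)
    (hDsum : ∑ i ∈ S, D i = 1)
    (h : ι → ℝ) (hh : ∀ i ∈ S, h i = 1 ∨ h i = -1)
    (γ : ℝ) (hγ0 : 0 < γ) (hγ : γ < 1 / 2)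
    (η : ℝ) (hη : η = 1 / 2 * Real.log ((1 + 2 * γ) / (1 - 2 * γ)))
    (hadv : 2 * γ ≤ ∑ i ∈ S, D i * h i) :
    ∑ i ∈ S, D i * Real.exp (-η * h i) ≤ 1 - 2 * γ ^ 2 := by
  have h1 : 0 < 1 - 2 * γ := by linarith
  have h2 : 0 < 1 + 2 * γ := by linarith
  have hηpos : 0 ≤ η := by
    rw [hη]
    have : 0 ≤ Real.log ((1 + 2 * γ) / (1 - 2 * γ)) := by
      apply Real.log_nonneg
      rw [le_div_iff₀ h1]
      linarith
    linarith
  have hab : Real.exp η * Real.exp (-η) = 1 := by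
    rw [← Real.exp_add]; simp
  have haa : Real.exp η * Real.exp η * (1 - 2 * γ) = 1 + 2 * γ := by
    rw [← Real.exp_add, show η + η = Real.log ((1 + 2 * γ) / (1 - 2 * γ)) by rw [hη]; ring,
      Real.exp_log (div_pos h2 h1)]
    field_simp
  have hle : Real.exp (-η) ≤ Real.exp η := Real.exp_le_exp.mpr (by linarith)
  have hb : 0 < Real.exp (-η) := Real.exp_pos _
  have key : ∑ i ∈ S, D i * Real.exp (-η * h i) =
      (Real.exp η + Real.exp (-η)) / 2 * ∑ i ∈ S, D i
        - (Real.exp η - Real.exp (-η)) / 2 * ∑ i ∈ S, D i * h i := by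
    rw [Finset.mul_sum, Finset.mul_sum, ← Finset.sum_sub_distrib]
    refine Finset.sum_congr rfl fun i hi => ?_
    rcases hh i hi with e | e
    · rw [e, mul_one]; ring
    · rw [e, mul_neg, mul_one, neg_neg]; ring
  rw [key, hDsum]
  generalize Real.exp η = a at *
  generalize Real.exp (-η) = b at *
  have hA := mul_le_mul_of_nonneg_left hadv (show 0 ≤ (a - b) / 2 by linarith)
  have hz : a * (1 - 2 * γ) = b * (1 + 2 * γ) := by
    linear_combination b * haa - a * (1 - 2 * γ) * hab
  have hz2 : (b * (1 + 2 * γ)) ^ 2 = 1 - 4 * γ ^ 2 := by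
    linear_combination (-(b * (1 + 2 * γ))) * hz + (1 - 2 * γ) * (1 + 2 * γ) * hab
  have hfin : b * (1 + 2 * γ) ≤ 1 - 2 * γ ^ 2 := by
    refine abs_le_of_sq_le_sq' ?_ ?_ |>.2
    · rw [hz2]; nlinarith [sq_nonneg (γ ^ 2)]
    · nlinarith
  linarith
end

section
/- Let u ≥ 2 and S ⊆ {1,…,u} be a nonempty finite set, let 0 < γ < 1/4, set η = (1/2)·ln((1+2γ)/(1−2γ)), and let k be a positive integer with k ≥ ln(u)·γ^{−2}. Let h₁,…,h_k: S → {−1,1} and define the multiplicative-weights process: D₁(i) = 1/|S| for i ∈ S; for j = 1,…,k set Z_j = ∑_{i ∈ S} D_j(i)·exp(−η·h_j(i)) and D_{j+1}(i) = D_j(i)·exp(−η·h_j(i))/Z_j. If ∑_{i ∈ S} D_j(i)·h_j(i) ≥ 2γ for every j ∈ {1,…,k}, then the average f(i) = (1/k)·∑_{j=1}^{k} h_j(i) satisfies f(i) ≥ γ/4 for every i ∈ S. -/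
/-- Margin guarantee for the AdaBoost-style majority vote: if every
round's hypothesis has advantage at least `2γ` under the current distribution and
`k ≥ ln(u)/γ²`, then the average `f(i) = (1/k)·∑_j h_j(i)` satisfies `f(i) ≥ γ/4`
for every `i ∈ S`. -/
theorem adaboost_margin_guarantee
    (u : ℕ) (hu : 2 ≤ u) (S : Finset (Fin u)) (hS : S.Nonempty)
    (γ : ℝ) (hγ0 : 0 < γ) (hγ : γ < 1 / 4)
    (η : ℝ) (hη : η = 1 / 2 * Real.log ((1 + 2 * γ) / (1 - 2 * γ)))
    (k : ℕ) (hk0 : 0 < k) (hk : Real.log u * (γ ^ 2)⁻¹ ≤ (k : ℝ))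
    (h : ℕ → Fin u → ℝ) (hh : ∀ j ∈ Finset.Icc 1 k, ∀ i ∈ S, h j i = 1 ∨ h j i = -1)
    (D : ℕ → Fin u → ℝ) (Z : ℕ → ℝ)
    (hD1 : ∀ i ∈ S, D 1 i = 1 / S.card)
    (hZ : ∀ j ∈ Finset.Icc 1 k, Z j = ∑ i ∈ S, D j i * Real.exp (-η * h j i))
    (hDsucc : ∀ j ∈ Finset.Icc 1 k, ∀ i ∈ S,
      D (j + 1) i = D j i * Real.exp (-η * h j i) / Z j)
    (hadv : ∀ j ∈ Finset.Icc 1 k, 2 * γ ≤ ∑ i ∈ S, D j i * h j i) :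
    ∀ i ∈ S, γ / 4 ≤ (1 / (k : ℝ)) * ∑ j ∈ Finset.Icc 1 k, h j i := by
  have hc : (0:ℝ) < S.card := by exact_mod_cast hS.card_pos
  have hq : 0 < (1 + 2 * γ) / (1 - 2 * γ) := div_pos (by linarith) (by linarith)
  have hA2 : Real.exp η * Real.exp η * (1 - 2 * γ) = 1 + 2 * γ := by
    rw [← Real.exp_add]
    have : η + η = Real.log ((1 + 2 * γ) / (1 - 2 * γ)) := by rw [hη]; ring
    rw [this, Real.exp_log hq]
    have : (1 - 2 * γ) ≠ 0 := by linarith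
    field_simp
  have hAB : Real.exp η * Real.exp (-η) = 1 := by rw [← Real.exp_add]; simp
  have hη0 : 0 < η := by
    rw [hη]
    have : 0 < Real.log ((1 + 2 * γ) / (1 - 2 * γ)) := by
      apply Real.log_pos
      rw [lt_div_iff₀ (by linarith)]; linarith
    linarith
  have hη4 : η ≤ 4 * γ := by
    have h1 := Real.log_le_sub_one_of_pos hq
    have h2 : (1 + 2 * γ) / (1 - 2 * γ) ≤ 1 + 8 * γ := by
      rw [div_le_iff₀ (by linarith)]; nlinarith
    rw [hη]; linarith
  have hApos := Real.exp_pos η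
  have hBpos := Real.exp_pos (-η)
  have hAB' : Real.exp (-η) < Real.exp η := Real.exp_lt_exp.2 (by linarith)
  generalize hA : Real.exp η = A at *
  generalize hB : Real.exp (-η) = B at *
  have hA1 : A * (1 - 2 * γ) = B * (1 + 2 * γ) := by
    calc A * (1 - 2 * γ) = (A * B) * A * (1 - 2 * γ) := by rw [hAB]; ring
      _ = B * (A * A * (1 - 2 * γ)) := by ring
      _ = _ := by rw [hA2]
  have hBexp : B * (1 + 2 * γ) ≤ Real.exp (-(2 * γ ^ 2)) := by
    refine le_of_abs_le (abs_le_of_sq_le_sq ?_ (Real.exp_pos _).le)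
    have e1 : (B * (1 + 2 * γ)) ^ 2 = 1 - 4 * γ ^ 2 := by
      calc (B * (1 + 2 * γ)) ^ 2 = (B * (1 + 2 * γ)) * (A * (1 - 2 * γ)) := by rw [hA1]; ring
        _ = (A * B) * (1 - 4 * γ ^ 2) := by ring
        _ = _ := by rw [hAB]; ring
    have e2 : Real.exp (-(2 * γ ^ 2)) ^ 2 = Real.exp (-(4 * γ ^ 2)) := by
      rw [sq, ← Real.exp_add]; ring_nf
    rw [e1, e2]
    have := Real.add_one_le_exp (-(4 * γ ^ 2))
    linarith
  have key : ∀ n ≤ k, (∀ i ∈ S, 0 < D (n + 1) i) ∧ (∑ i ∈ S, D (n + 1) i = 1) ∧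
      ∀ i ∈ S, Real.exp (-η * ∑ j ∈ Finset.Icc 1 n, h j i) ≤
        D (n + 1) i * (S.card * Real.exp (-(2 * γ ^ 2) * n)) := by
    intro n
    induction n with
    | zero =>
      intro _
      refine ⟨fun i hi => ?_, ?_, fun i hi => ?_⟩
      · rw [zero_add, hD1 i hi]; positivity
      · rw [zero_add, Finset.sum_congr rfl hD1]
        simp [hc.ne']
      · rw [zero_add, hD1 i hi]
        simp [hc.ne']
    | succ n ih =>
      intro hn
      obtain ⟨hp, hs, hb⟩ := ih (by omega)
      have hm : n + 1 ∈ Finset.Icc 1 k := by simp; omega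
      have hZ1 := hZ _ hm
      have hZpos : 0 < Z (n + 1) := by
        rw [hZ1]
        exact Finset.sum_pos (fun i hi => mul_pos (hp i hi) (Real.exp_pos _)) hS
      have hZ2 : Z (n + 1) = (A + B) / 2 - (A - B) / 2 * ∑ i ∈ S, D (n + 1) i * h (n + 1) i := by
        have : Z (n + 1) = (A + B) / 2 * ∑ i ∈ S, D (n + 1) i
            - (A - B) / 2 * ∑ i ∈ S, D (n + 1) i * h (n + 1) i := by
          rw [hZ1, Finset.mul_sum, Finset.mul_sum, ← Finset.sum_sub_distrib]
          refine Finset.sum_congr rfl fun i hi => ?_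
          rcases hh _ hm i hi with e | e
          · rw [e, mul_one, hB]; ring
          · rw [e, neg_mul_neg, mul_one, hA]; ring
        rw [this, hs, mul_one]
      have hZ3 : Z (n + 1) ≤ Real.exp (-(2 * γ ^ 2)) := by
        refine le_trans ?_ hBexp
        have := mul_le_mul_of_nonneg_left (hadv _ hm) (show 0 ≤ (A - B) / 2 by linarith)
        rw [hZ2]
        nlinarith
      refine ⟨fun i hi => ?_, ?_, fun i hi => ?_⟩
      · rw [hDsucc _ hm i hi]
        exact div_pos (mul_pos (hp i hi) (Real.exp_pos _)) hZpos
      · rw [Finset.sum_congr rfl (hDsucc _ hm), ← Finset.sum_div, ← hZ1, div_self hZpos.ne']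
      · have hd : D (n + 1) i * Real.exp (-η * h (n + 1) i) = D (n + 1 + 1) i * Z (n + 1) := by
          rw [hDsucc _ hm i hi, div_mul_cancel₀ _ hZpos.ne']
        have hDp : 0 < D (n + 1 + 1) i := by
          rw [hDsucc _ hm i hi]
          exact div_pos (mul_pos (hp i hi) (Real.exp_pos _)) hZpos
        rw [Finset.sum_Icc_succ_top (by omega), mul_add, Real.exp_add]
        calc _ ≤ D (n + 1) i * (S.card * Real.exp (-(2 * γ ^ 2) * n))
                * Real.exp (-η * h (n + 1) i) :=
              mul_le_mul_of_nonneg_right (hb i hi) (Real.exp_pos _).le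
          _ = (D (n + 1) i * Real.exp (-η * h (n + 1) i))
                * (S.card * Real.exp (-(2 * γ ^ 2) * n)) := by ring
          _ = D (n + 1 + 1) i * (S.card * Real.exp (-(2 * γ ^ 2) * n)) * Z (n + 1) := by
              rw [hd]; ring
          _ ≤ D (n + 1 + 1) i * (S.card * Real.exp (-(2 * γ ^ 2) * n))
                * Real.exp (-(2 * γ ^ 2)) :=
              mul_le_mul_of_nonneg_left hZ3 (mul_pos hDp (mul_pos hc (Real.exp_pos _))).le
          _ = D (n + 1 + 1) i * (S.card *
                (Real.exp (-(2 * γ ^ 2) * n) * Real.exp (-(2 * γ ^ 2)))) := by ring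
          _ = _ := by
              rw [← Real.exp_add, Nat.cast_add, Nat.cast_one, mul_add, mul_one]
  intro i hi
  obtain ⟨hp, hs, hb⟩ := key k le_rfl
  have hD : D (k + 1) i ≤ 1 := by
    rw [← hs]
    exact Finset.single_le_sum (f := D (k + 1)) (fun j hj => (hp j hj).le) hi
  have hu0 : (0:ℝ) < u := by exact_mod_cast (by omega : 0 < u)
  have hcu : (S.card : ℝ) ≤ u := by
    have := S.card_le_univ
    rw [Fintype.card_fin] at this
    exact_mod_cast this
  have hlog : Real.log u ≤ k * γ ^ 2 := by
    rwa [← div_eq_mul_inv, div_le_iff₀ (by positivity)] at hk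
  have hue : (u : ℝ) ≤ Real.exp (k * γ ^ 2) := (Real.log_le_iff_le_exp hu0).1 hlog
  have hfin : Real.exp (-η * ∑ j ∈ Finset.Icc 1 k, h j i) ≤ Real.exp (-(k * γ ^ 2)) := by
    calc _ ≤ _ := hb i hi
      _ ≤ 1 * (Real.exp (k * γ ^ 2) * Real.exp (-(2 * γ ^ 2) * k)) := by
          gcongr
          exact hcu.trans hue
      _ = _ := by rw [one_mul, ← Real.exp_add]; ring_nf
  rw [Real.exp_le_exp] at hfin
  have hk' : (0:ℝ) < k := by exact_mod_cast hk0
  generalize ∑ j ∈ Finset.Icc 1 k, h j i = T at *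
  rw [one_div, inv_mul_eq_div, le_div_iff₀ hk']
  have h1 : k * γ ^ 2 ≤ η * T := by linarith
  have hT : 0 < T := by
    by_contra hT
    have : 0 < k * γ ^ 2 := by positivity
    nlinarith
  have h2 : η * T ≤ 4 * γ * T := mul_le_mul_of_nonneg_right hη4 hT.le
  have h3 : γ * (γ * k) ≤ γ * (4 * T) := by nlinarith
  have := le_of_mul_le_mul_left h3 hγ0
  linarith
end

section
/- Let α ≥ 1 be a real, let r ≥ 1 be a real and m a positive integer with m ≥ 4r, and suppose u := 8α²·m/ln(m/r) is a positive integer; set r₁ = α²·r, so that u ≥ 8r₁. Let S consist of m independent uniform samples from {1,…,u}. Then with probability at least 1/4, at least r elements of {1,…,u−r₁} do not appear in S. -/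
open MeasureTheory

theorem aux_second_moment (m u : ℕ) (hu : 2 ≤ u) (A : Finset (Fin u)) (r : ℝ) (hr : 1 ≤ r)
    (hμ : 4 * r ≤ (A.card : ℝ) * (1 - 1 / (u : ℝ)) ^ m) :
    (u : ℝ) ^ m / 4 ≤ (((Finset.univ : Finset (Fin m → Fin u)).filter
      (fun s => r ≤ ((A.filter (fun x => ∀ t, s t ≠ x)).card : ℝ))).card : ℝ) := by
  classical
  set X : (Fin m → Fin u) → ℝ := fun s => ((A.filter (fun x => ∀ t, s t ≠ x)).card : ℝ) with hX
  have hXs : ∀ s, X s = ∑ x ∈ A, (if ∀ t, s t ≠ x then (1 : ℝ) else 0) := by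
    intro s; simp [hX]
  have hu0 : (0 : ℝ) < u := by positivity
  set p : ℝ := (1 - 1 / (u : ℝ)) ^ m with hp
  set μ : ℝ := (A.card : ℝ) * p with hμd
  have huR : (2 : ℝ) ≤ u := by exact_mod_cast hu
  have hq : (0 : ℝ) ≤ 1 - 1 / (u : ℝ) := by
    rw [sub_nonneg, div_le_one hu0]; linarith
  have hp0 : 0 ≤ p := by positivity
  have h1 : ∀ x : Fin u, (∑ s : Fin m → Fin u, (if ∀ t, s t ≠ x then (1 : ℝ) else 0))
      = (u : ℝ) ^ m * p := by
    intro x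
    have : (Finset.univ.filter (fun s : Fin m → Fin u => ∀ t, s t ≠ x))
        = Fintype.piFinset (fun _ => Finset.univ.erase x) := by
      ext s; simp [Fintype.mem_piFinset]
    rw [Finset.sum_boole, this, Fintype.card_piFinset]
    simp only [Finset.prod_const, Finset.card_univ, Fintype.card_fin,
      Finset.card_erase_of_mem (Finset.mem_univ _)]
    rw [hp, ← mul_pow]
    push_cast [Nat.cast_sub (by omega : 1 ≤ u)]
    congr 1; field_simp
  have h2 : ∀ x y : Fin u, x ≠ y → (∑ s : Fin m → Fin u,
      (if ∀ t, s t ≠ x then (1 : ℝ) else 0) * (if ∀ t, s t ≠ y then (1 : ℝ) else 0))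
      ≤ (u : ℝ) ^ m * p ^ 2 := by
    intro x y hxy
    have h3 : (Finset.univ.filter (fun s : Fin m → Fin u => (∀ t, s t ≠ x) ∧ (∀ t, s t ≠ y)))
        = Fintype.piFinset (fun _ => (Finset.univ.erase x).erase y) := by
      ext s; simp only [Finset.mem_filter, Finset.mem_univ, true_and, Fintype.mem_piFinset,
        Finset.mem_erase, and_true]
      exact ⟨fun h a => ⟨h.2 a, h.1 a⟩, fun h => ⟨fun a => (h a).2, fun a => (h a).1⟩⟩
    have h4 : ∀ s : Fin m → Fin u, (if ∀ t, s t ≠ x then (1 : ℝ) else 0) *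
        (if ∀ t, s t ≠ y then (1 : ℝ) else 0)
        = if (∀ t, s t ≠ x) ∧ (∀ t, s t ≠ y) then (1 : ℝ) else 0 := by
      intro s
      rw [ite_and]; split_ifs <;> simp
    simp only [h4]
    rw [Finset.sum_boole, h3, Fintype.card_piFinset]
    have hy : y ∈ (Finset.univ : Finset (Fin u)).erase x := by simp [hxy.symm]
    simp only [Finset.prod_const, Finset.card_univ, Fintype.card_fin,
      Finset.card_erase_of_mem (Finset.mem_univ _), Finset.card_erase_of_mem hy]
    rw [hp, ← pow_mul, mul_comm m 2, pow_mul, ← mul_pow]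
    rw [Nat.sub_sub]
    push_cast [Nat.cast_sub (by omega : 1 + 1 ≤ u)]
    apply pow_le_pow_left₀ (by linarith)
    have : (u : ℝ) * (1 - 1 / u) ^ 2 = u - 2 + 1 / u := by field_simp; ring
    rw [this]
    have : (0 : ℝ) ≤ 1 / u := by positivity
    linarith
  have hE : ∑ s, X s = (u : ℝ) ^ m * μ := by
    simp only [hXs]
    rw [Finset.sum_comm]
    simp only [h1, Finset.sum_const, nsmul_eq_mul, hμd]
    ring
  have hE2 : ∑ s, X s ^ 2 ≤ (u : ℝ) ^ m * (μ + μ ^ 2) := by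
    have : ∀ s, X s ^ 2 = ∑ x ∈ A, ∑ y ∈ A, (if ∀ t, s t ≠ x then (1 : ℝ) else 0) *
        (if ∀ t, s t ≠ y then (1 : ℝ) else 0) := by
      intro s; rw [hXs, sq, Finset.sum_mul_sum]
    simp only [this]
    rw [Finset.sum_comm]
    calc _ ≤ ∑ x ∈ A, ((u : ℝ) ^ m * p + A.card * ((u : ℝ) ^ m * p ^ 2)) := by
          apply Finset.sum_le_sum
          intro x hx
          rw [Finset.sum_comm]
          calc _ ≤ ∑ y ∈ A, ((if x = y then (u : ℝ) ^ m * p else 0) + (u : ℝ) ^ m * p ^ 2) := by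
                apply Finset.sum_le_sum
                intro y hy
                by_cases hxy : x = y
                · subst hxy
                  simp only [if_true]
                  have : ∀ s : Fin m → Fin u, (if ∀ t, s t ≠ x then (1 : ℝ) else 0) *
                    (if ∀ t, s t ≠ x then (1 : ℝ) else 0) = (if ∀ t, s t ≠ x then (1 : ℝ) else 0) := by
                    intro s; split_ifs <;> simp
                  simp only [this]
                  rw [h1]
                  have : 0 ≤ (u : ℝ) ^ m * p ^ 2 := by positivity
                  linarith
                · simp only [hxy, if_false, zero_add]
                  exact h2 x y hxy
            _ = _ := by
                rw [Finset.sum_add_distrib, Finset.sum_ite_eq]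
                simp [hx]
      _ = _ := by
          simp only [Finset.sum_const, nsmul_eq_mul, hμd]; ring
  have hV : ∑ s, (X s - μ) ^ 2 ≤ (u : ℝ) ^ m * μ := by
    have : ∑ s, (X s - μ) ^ 2 = ∑ s, X s ^ 2 - 2 * μ * ∑ s, X s + (u : ℝ) ^ m * μ ^ 2 := by
      have e : ∀ s, (X s - μ) ^ 2 = X s ^ 2 - 2 * μ * X s + μ ^ 2 := fun s => by ring
      simp only [e, Finset.sum_add_distrib, Finset.sum_sub_distrib, ← Finset.mul_sum]
      simp
    rw [this, hE]; nlinarith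
  set G := (Finset.univ : Finset (Fin m → Fin u)).filter (fun s => r ≤ X s) with hG
  set B := (Finset.univ : Finset (Fin m → Fin u)).filter (fun s => ¬ r ≤ X s) with hB
  have hGB : (G.card : ℝ) + B.card = (u : ℝ) ^ m := by
    have := Finset.card_filter_add_card_filter_not (s := (Finset.univ : Finset (Fin m → Fin u)))
      (fun s => r ≤ X s)
    have h5 : G.card + B.card = u ^ m := by
      rw [hG, hB, this]; simp
    exact_mod_cast h5
  have hBs : (B.card : ℝ) * (μ - r) ^ 2 ≤ (u : ℝ) ^ m * μ := by
    refine le_trans ?_ hV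
    calc (B.card : ℝ) * (μ - r) ^ 2 = ∑ s ∈ B, (μ - r) ^ 2 := by simp
      _ ≤ ∑ s ∈ B, (X s - μ) ^ 2 := by
          apply Finset.sum_le_sum
          intro s hs
          have : ¬ r ≤ X s := (Finset.mem_filter.mp hs).2
          nlinarith
      _ ≤ _ := Finset.sum_le_sum_of_subset_of_nonneg (Finset.subset_univ _)
          (fun _ _ _ => sq_nonneg _)
  have hU : (0 : ℝ) < (u : ℝ) ^ m := by positivity
  have hμ4 : 4 * r ≤ μ := hμ
  have hsq : 4 / 3 * μ ≤ (μ - r) ^ 2 := by nlinarith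
  have hb : (B.card : ℝ) ≤ 3 / 4 * (u : ℝ) ^ m := by
    have : (B.card : ℝ) * (4 / 3 * μ) ≤ (u : ℝ) ^ m * μ :=
      le_trans (mul_le_mul_of_nonneg_left hsq (by positivity)) hBs
    have hμp : 0 < μ := by linarith
    by_contra hc
    push Not at hc
    nlinarith
  linarith

theorem aux_mean (α r : ℝ) (hα : 1 ≤ α) (hr : 1 ≤ r)
    (m : ℕ) (hmr : 4 * r ≤ (m : ℝ)) (u : ℕ)
    (hu_val : (u : ℝ) = 8 * α ^ 2 * m / Real.log ((m : ℝ) / r))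
    (r1 : ℝ) (hr1 : r1 = α ^ 2 * r) :
    2 ≤ u ∧ r1 ≤ u ∧ 4 * r ≤ ((u : ℝ) - r1 - 1) * (1 - 1 / (u : ℝ)) ^ m := by
  set L := Real.log ((m : ℝ) / r) with hL
  have hr0 : 0 < r := by linarith
  have hm0 : (0 : ℝ) < m := by linarith
  have hmr' : 4 ≤ (m : ℝ) / r := by rw [le_div_iff₀ hr0]; linarith
  have hL0 : 0 < L := Real.log_pos (by linarith)
  have hexp : Real.exp L = m / r := Real.exp_log (by linarith)
  have hm_eq : (m : ℝ) = r * Real.exp L := by rw [hexp]; field_simp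
  have hmul : (u : ℝ) * L = 8 * α ^ 2 * m := by rw [hu_val]; field_simp
  have ha : 1 ≤ α ^ 2 := by nlinarith
  have hr1' : 1 ≤ r1 := by rw [hr1]; nlinarith
  have hrr1 : r ≤ r1 := by rw [hr1]; nlinarith
  have hur : 8 * r1 ≤ u := by
    have : L ≤ Real.exp L := by linarith [Real.add_one_le_exp L]
    have h : 8 * r1 * L ≤ u * L := by
      rw [hmul, hm_eq, hr1]
      have : α ^ 2 * r * L ≤ α ^ 2 * r * Real.exp L :=
        mul_le_mul_of_nonneg_left this (by positivity)
      linarith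
    exact le_of_mul_le_mul_right h hL0
  have hu8 : (8 : ℝ) ≤ u := by linarith
  refine ⟨by exact_mod_cast (by linarith : (2 : ℝ) ≤ u), by linarith, ?_⟩
  have hu0 : (0 : ℝ) < u := by linarith
  have hbase : Real.exp (-(2 / (u : ℝ))) ≤ 1 - 1 / (u : ℝ) := by
    rw [Real.exp_neg]
    have h1 := Real.add_one_le_exp (2 / (u : ℝ))
    have h2 : 0 < 2 / (u : ℝ) + 1 := by positivity
    refine (inv_anti₀ h2 h1).trans ?_
    rw [inv_le_iff_one_le_mul₀ h2]
    have : (1 - 1 / (u : ℝ)) * (2 / u + 1) = 1 + (u - 2) / u ^ 2 := by field_simp; ring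
    rw [this]
    have : 0 ≤ ((u : ℝ) - 2) / u ^ 2 := div_nonneg (by linarith) (by positivity)
    linarith
  have hp : Real.exp (-(L / 4)) ≤ (1 - 1 / (u : ℝ)) ^ m := by
    refine le_trans ?_ (pow_le_pow_left₀ (Real.exp_pos _).le hbase m)
    rw [← Real.exp_nat_mul]
    apply Real.exp_le_exp.mpr
    have : (m : ℝ) * (2 / u) ≤ L / 4 := by
      rw [mul_div_assoc', div_le_iff₀ hu0]
      nlinarith
    linarith
  have hfac : (u : ℝ) / 2 ≤ u - r1 - 1 := by linarith
  refine le_trans ?_ (mul_le_mul hfac hp (Real.exp_pos _).le (by linarith))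
  have h3 : L ≤ Real.exp (3 * L / 4) := by
    have e : Real.exp (3 * L / 4) = Real.exp (3 * L / 8) ^ 2 := by
      rw [← Real.exp_nat_mul]; congr 1; push_cast; ring
    rw [e]
    have := Real.add_one_le_exp (3 * L / 8)
    nlinarith [sq_nonneg (3 * L / 8 - 1)]
  have h4 : Real.exp L * Real.exp (-(L / 4)) = Real.exp (3 * L / 4) := by
    rw [← Real.exp_add]; congr 1; ring
  have h5 : 4 * r * L ≤ (u : ℝ) / 2 * Real.exp (-(L / 4)) * L := by
    have : (u : ℝ) / 2 * Real.exp (-(L / 4)) * L = 4 * (α ^ 2 * r) * Real.exp (3 * L / 4) := by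
      rw [← h4]
      calc _ = (u * L) / 2 * Real.exp (-(L / 4)) := by ring
        _ = _ := by rw [hmul, hm_eq]; ring
    rw [this, ← hr1]
    have := mul_le_mul hrr1 h3 hL0.le (by linarith)
    linarith
  exact le_of_mul_le_mul_right h5 hL0

/-- With `u = 8α²m/ln(m/r)` and `r₁ = α²r`, drawing `m` i.i.d.
uniform samples from `{1,…,u}` leaves, with probability at least `1/4`, at least `r`
elements of `{1,…,u−r₁}` unsampled. -/
theorem adaboost_unsampled_points
    (α r : ℝ) (hα : 1 ≤ α) (hr : 1 ≤ r)
    (m : ℕ) (hm : 0 < m) (hmr : 4 * r ≤ (m : ℝ))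
    (u : ℕ) [NeZero u] (hu : 0 < u)
    (hu_val : (u : ℝ) = 8 * α ^ 2 * m / Real.log ((m : ℝ) / r))
    (r1 : ℝ) (hr1 : r1 = α ^ 2 * r) :
    ENNReal.ofReal (1 / 4) ≤
      (PMF.uniformOfFintype (Fin m → Fin u)).toMeasure
        {s | r ≤ (({x : Fin u | ((x : ℕ) + 1 : ℝ) ≤ (u : ℝ) - r1 ∧
          ∀ t, s t ≠ x}).ncard : ℝ)} := by
  classical
  obtain ⟨hu2, hr1u, hmean⟩ := aux_mean α r hα hr m hmr u hu_val r1 hr1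
  set A : Finset (Fin u) := Finset.univ.filter (fun x : Fin u => ((x : ℕ) + 1 : ℝ) ≤ (u : ℝ) - r1)
    with hA
  have hcard : (u : ℝ) - r1 - 1 ≤ A.card := by
    have hk : ⌊(u : ℝ) - r1⌋₊ ≤ u := by
      apply Nat.floor_le_of_le
      have : 0 < r1 := by rw [hr1]; positivity
      linarith
    have hAe : A.card = ⌊(u : ℝ) - r1⌋₊ := by
      have : A = Finset.univ.filter (fun x : Fin u => (x : ℕ) < ⌊(u : ℝ) - r1⌋₊) := by
        ext x
        simp only [hA, Finset.mem_filter, Finset.mem_univ, true_and]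
        rw [← Nat.succ_le_iff, Nat.le_floor_iff (by linarith)]
        push_cast; rfl
      rw [this, Fin.card_filter_val_lt]
      simp [hk]
    rw [hAe]
    linarith [Nat.lt_floor_add_one ((u : ℝ) - r1)]
  have huR : (2 : ℝ) ≤ u := by exact_mod_cast hu2
  have hq : (0 : ℝ) ≤ 1 - 1 / (u : ℝ) := by
    rw [sub_nonneg, div_le_one (by linarith)]; linarith
  have key := aux_second_moment m u hu2 A r hr
    (hmean.trans (mul_le_mul_of_nonneg_right hcard (by positivity)))
  have hset : {s : Fin m → Fin u | r ≤ (({x : Fin u | ((x : ℕ) + 1 : ℝ) ≤ (u : ℝ) - r1 ∧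
          ∀ t, s t ≠ x}).ncard : ℝ)} = (((Finset.univ : Finset (Fin m → Fin u)).filter
      (fun s => r ≤ ((A.filter (fun x => ∀ t, s t ≠ x)).card : ℝ)) : Finset _) : Set _) := by
    ext s
    have : {x : Fin u | ((x : ℕ) + 1 : ℝ) ≤ (u : ℝ) - r1 ∧ ∀ t, s t ≠ x}
        = ((A.filter (fun x => ∀ t, s t ≠ x) : Finset _) : Set _) := by
      ext x; simp [hA]
    simp only [Set.mem_setOf_eq, this, Set.ncard_coe_finset]
    simp
  rw [hset, PMF.toMeasure_uniformOfFintype_apply _ (Finset.measurableSet _)]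
  simp only [Fintype.card_coe, Finset.coe_sort_coe, Fintype.card_fun, Fintype.card_fin]
  rw [ENNReal.le_div_iff_mul_le (Or.inl (by simp; omega)) (Or.inl (by simp))]
  rw [← ENNReal.ofReal_natCast, ← ENNReal.ofReal_natCast, ← ENNReal.ofReal_mul (by norm_num)]
  apply ENNReal.ofReal_le_ofReal
  push_cast
  linarith
end

section
/- Let n ≥ 2 and r be positive integers with r ≥ 40·log₂(n). Let W be the set of all w ∈ ℝ^n such that ‖w‖₁ = 1 and every coordinate w_i is of the form j_i·40·log₂(n)/r for some integer j_i. Then |W| ≤ 2^{r/20}. -/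
lemma aux_cover (n k : ℕ) : ∃ T : Finset (Fin n → ℤ), T.card ≤ (2 * n) ^ k ∧
    ∀ j : Fin n → ℤ, (∑ i, (j i).natAbs) = k → j ∈ T := by
  classical
  induction k with
  | zero =>
    refine ⟨{0}, by simp, ?_⟩
    intro j hj
    simp only [Finset.mem_singleton]
    funext i
    have := (Finset.sum_eq_zero_iff.mp hj) i (Finset.mem_univ i)
    simpa using this
  | succ k ih =>
    obtain ⟨T, hT, hc⟩ := ih
    refine ⟨((Finset.univ : Finset (Fin n × Bool)) ×ˢ T).image
      (fun p => Function.update p.2 p.1.1 (p.2 p.1.1 + if p.1.2 then 1 else -1)), ?_, ?_⟩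
    · refine Finset.card_image_le.trans ?_
      rw [Finset.card_product, Finset.card_univ, Fintype.card_prod, Fintype.card_fin,
        Fintype.card_bool, pow_succ, mul_comm n 2, mul_comm]
      exact Nat.mul_le_mul_right _ hT
    · intro j hj
      obtain ⟨i, hi⟩ : ∃ i, j i ≠ 0 := by
        by_contra! h
        simp [h] at hj
      have key : ∀ x : ℤ, x.natAbs + 1 = (j i).natAbs →
          Function.update j i x ∈ T := by
        intro x hx
        apply hc
        rw [← Finset.add_sum_erase _ _ (Finset.mem_univ i)] at hj ⊢
        have : ∑ y ∈ Finset.univ.erase i, (Function.update j i x y).natAbs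
            = ∑ y ∈ Finset.univ.erase i, (j y).natAbs := by
          refine Finset.sum_congr rfl fun y hy => ?_
          rw [Function.update_of_ne (Finset.ne_of_mem_erase hy)]
        rw [this, Function.update_self]
        omega
      rw [Finset.mem_image]
      rcases lt_or_gt_of_ne hi with h | h
      · refine ⟨((i, false), Function.update j i (j i + 1)), ?_, ?_⟩
        · simpa using key (j i + 1) (by omega)
        · simp
      · refine ⟨((i, true), Function.update j i (j i - 1)), ?_, ?_⟩
        · simpa using key (j i - 1) (by omega)
        · simp

/-- The discretized set `W` of unit-`ℓ₁` vectors whose coordinates are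
integer multiples of `40·log₂(n)/r` is finite, of size at most `2^(r/20)`. -/
theorem adaboost_discretization_size
    (n r : ℕ) (hn : 2 ≤ n) (hr : 0 < r) (hrn : 40 * Real.logb 2 n ≤ (r : ℝ))
    (W : Set (Fin n → ℝ))
    (hW : W = {w | (∑ i, |w i|) = 1 ∧
      ∀ i, ∃ j : ℤ, w i = (j : ℝ) * (40 * Real.logb 2 n / r)}) :
    W.Finite ∧ (Nat.card W : ℝ) ≤ (2 : ℝ) ^ ((r : ℝ) / 20) := by
  classical
  rcases W.eq_empty_or_nonempty with h0 | ⟨w0, hw0⟩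
  · rw [h0]
    refine ⟨Set.finite_empty, ?_⟩
    simp
    positivity
  have hn' : (1 : ℝ) < n := by exact_mod_cast hn
  have hL : 0 < Real.logb 2 n := Real.logb_pos (by norm_num) hn'
  have hr' : (0 : ℝ) < r := by exact_mod_cast hr
  set c : ℝ := 40 * Real.logb 2 n / r with hcdef
  have hc : 0 < c := by positivity
  have hsum : ∀ w ∈ W, ∃ j : Fin n → ℤ, (w = fun i => (j i : ℝ) * c) ∧
      ((∑ i, (j i).natAbs : ℕ) : ℝ) * c = 1 := by
    intro w hw
    rw [hW] at hw
    obtain ⟨h1, h2⟩ := hw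
    choose j hj using h2
    refine ⟨j, funext hj, ?_⟩
    rw [← h1]
    push_cast
    rw [Finset.sum_mul]
    refine Finset.sum_congr rfl fun i _ => ?_
    rw [hj i, abs_mul, abs_of_pos hc, Nat.cast_natAbs, Int.cast_abs]
  obtain ⟨j0, -, hj0⟩ := hsum w0 hw0
  set k := ∑ i, (j0 i).natAbs with hk
  obtain ⟨T, hT, hcov⟩ := aux_cover n k
  have hsub : W ⊆ ((T.image (fun j : Fin n → ℤ => fun i => (j i : ℝ) * c) :
      Finset (Fin n → ℝ)) : Set (Fin n → ℝ)) := by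
    intro w hw
    obtain ⟨j, hj, hj1⟩ := hsum w hw
    have : ((∑ i, (j i).natAbs : ℕ) : ℝ) = (k : ℝ) :=
      mul_right_cancel₀ hc.ne' (hj1.trans hj0.symm)
    have hm := hcov j (by exact_mod_cast this)
    rw [Finset.mem_coe, Finset.mem_image]
    exact ⟨j, hm, hj.symm⟩
  refine ⟨(Finset.finite_toSet _).subset hsub, ?_⟩
  have hcard : Nat.card W ≤ (2 * n) ^ k := by
    have h := Set.ncard_le_ncard hsub (Finset.finite_toSet _)
    rw [Set.ncard_coe_finset] at h
    exact h.trans (Finset.card_image_le.trans hT)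
  have h2 : (2 * n) ^ k ≤ (n ^ 2) ^ k := Nat.pow_le_pow_left (by nlinarith) k
  have h3 : (Nat.card W : ℝ) ≤ ((n : ℝ) ^ 2) ^ k := by exact_mod_cast hcard.trans h2
  refine h3.trans (le_of_eq ?_)
  have hr20 : (r : ℝ) / 20 = Real.logb 2 n * ((2 * k : ℕ) : ℝ) := by
    rw [hcdef] at hj0
    field_simp at hj0
    push_cast
    linarith
  rw [hr20, Real.rpow_mul (by norm_num), Real.rpow_logb (by norm_num) (by norm_num) (by linarith),
    Real.rpow_natCast, pow_mul]
end
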